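/- Let α_1 ≤ α_2, α ≥ 0, w = (w_j)_{j∈ℕ_0} ∈ W^α_{α_1,α_2} an admissible weight sequence. Let ψ_0, ψ_1 ∈ S(ℝ^n) satisfy |ψ_0(x)| > 0 on {|x| ≤ kε} and |ψ_1(x)| > 0 on {ε ≤ |x| ≤ 2kε} for some ε > 0 and k ∈ (1,2]; set ψ_j(x) := ψ_1(2^{−j+1}x) for j ≥ 2 and Ψ_j := ψ̂_j. Let t > 0, N ∈ ℕ_0 and a with α < a ≤ N, and set η_{j,s}(x) := 2^{jn}(1+2^j|x|)^{−s}. Then there is c > 0 such that for every f ∈ S'(ℝ^n), every ν ∈ ℕ_0 and every x ∈ ℝ^n: ((Ψ_ν^* f)_a(x))^t (w_ν(x))^t ≤ c ∑_{j=ν}^∞ 2^{−(j−ν)(N−a+α_1)t} ( η_{j,(a−α)t} ∗ (|Ψ_j ∗ f| w_j)^t )(x). -/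

import Mathlib

open MeasureTheory ENNReal Real
open scoped FourierTransform

noncomputable section

/-- Euclidean space `ℝ^n`. -/
abbrev Rn (n : ℕ) : Type := EuclideanSpace ℝ (Fin n)

variable {n : ℕ}

/-- The function `φ_t(s)` used in the semimodular of variable exponent Lebesgue spaces:
`φ_t(s) = s^t` for `t < ∞`, while `φ_∞(s) = 0` for `s ≤ 1` and `= ∞` for `s > 1`. -/
def phiVE (t : ℝ≥0∞) (s : ℝ≥0∞) : ℝ≥0∞ :=
  if t = ∞ then (if s ≤ 1 then 0 else ∞) else s ^ t.toReal

/-- The semimodular `ρ_p` of variable exponent Lebesgue spaces. -/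
def modularVE (p : Rn n → ℝ≥0∞) (g : Rn n → ℝ≥0∞) : ℝ≥0∞ :=
  ∫⁻ x, phiVE (p x) (g x)

/-- The variable exponent Lebesgue quasi-norm `‖·‖_{L^{p(·)}(ℝ^n)}`, applied to the
(pointwise) absolute value of a function, i.e. to `[0,∞]`-valued functions.
(For `p⁻ ≥ 1` this is the usual Luxemburg norm; for general `p` it agrees with the
definition via `‖f‖ = ‖|f|^t‖_{L^{p/t}}^{1/t}`.) -/
def vLpNorm (p : Rn n → ℝ≥0∞) (g : Rn n → ℝ≥0∞) : ℝ≥0∞ :=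
  sInf {lam : ℝ≥0∞ | modularVE p (fun x => g x / lam) ≤ 1}

/-- A variable exponent: a measurable function `p : ℝ^n → (0,∞]` with `p⁻ = ess inf p > 0`. -/
def IsVarExp (p : Rn n → ℝ≥0∞) : Prop :=
  Measurable p ∧ (∀ x, 0 < p x) ∧ 0 < essInf p (volume : Measure (Rn n))

/-- Local log-Hölder continuity of `g : ℝ^n → ℝ`. -/
def LocLogHolder (g : Rn n → ℝ) : Prop :=
  ∃ c > 0, ∀ x y : Rn n, |g x - g y| ≤ c / Real.log (Real.exp 1 + (dist x y)⁻¹)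

/-- Log-Hölder decay of `g` at infinity, with limit value `gInf` and constant `c`. -/
def LogDecay (g : Rn n → ℝ) (gInf c : ℝ) : Prop :=
  ∀ x : Rn n, |g x - gInf| ≤ c / Real.log (Real.exp 1 + ‖x‖)

/-- `p ∈ P^log(ℝ^n)`, with prescribed limit value `pinvInf = 1/p_∞` of `1/p` at infinity. -/
def IsPLogWith (p : Rn n → ℝ≥0∞) (pinvInf : ℝ) : Prop :=
  IsVarExp p ∧ LocLogHolder (fun x => (p x)⁻¹.toReal) ∧
    ∃ c > 0, LogDecay (fun x => (p x)⁻¹.toReal) pinvInf c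

/-- `p ∈ P^log(ℝ^n)`. -/
def IsPLog (p : Rn n → ℝ≥0∞) : Prop := ∃ pinvInf : ℝ, IsPLogWith p pinvInf

/-- The Morrey quasi-norm `‖·‖_{M^{u(·)}_{p(·)}(ℝ^n)}` of a `[0,∞]`-valued function:
`sup_{x, r>0} r^{n(1/u(x) - 1/p(x))} ‖f‖_{L^{p(·)}(B_r(x))}`. -/
def morreyNorm (p u : Rn n → ℝ≥0∞) (g : Rn n → ℝ≥0∞) : ℝ≥0∞ :=
  ⨆ (x : Rn n) (r : ℝ) (_ : 0 < r),
    ENNReal.ofReal (r ^ ((n : ℝ) * ((u x)⁻¹.toReal - (p x)⁻¹.toReal))) *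
      vLpNorm p ((Metric.ball x r).indicator g)

/-- The `ℓ^q` (quasi-)norm of a sequence in `[0,∞]`, with the usual modification for `q = ∞`. -/
def lqNorm (q : ℝ≥0∞) (a : ℕ → ℝ≥0∞) : ℝ≥0∞ :=
  if q = ∞ then ⨆ ν, a ν else (∑' ν, a ν ^ q.toReal) ^ (1 / q.toReal)

/-- The vector-valued Morrey quasi-norm `‖(f_ν)_ν‖_{M^{u(·)}_{p(·)}(ℓ^{q(·)})}`. -/
def morreySeqNorm (p u q : Rn n → ℝ≥0∞) (f : ℕ → Rn n → ℝ≥0∞) : ℝ≥0∞ :=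
  morreyNorm p u (fun x => lqNorm (q x) (fun ν => f ν x))

/-- The kernel `η_{ν,m}(x) = 2^{νn} (1 + 2^ν |x|)^{-m}`. -/
def etaK (ν : ℕ) (m : ℝ) (x : Rn n) : ℝ≥0∞ :=
  ENNReal.ofReal ((2 : ℝ) ^ (ν * n) * (1 + 2 ^ ν * ‖x‖) ^ (-m))

/-- Convolution of `[0,∞]`-valued functions. -/
def lconv (f g : Rn n → ℝ≥0∞) (x : Rn n) : ℝ≥0∞ := ∫⁻ y, f (x - y) * g y

/-- The constant `c_{p,u} = max(0, sup_x (1/p(x) - 1/u(x)) - 1/p_∞)`. -/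
def cpu (p u : Rn n → ℝ≥0∞) (pinvInf : ℝ) : ℝ :=
  max 0 ((⨆ x : Rn n, ((p x)⁻¹.toReal - (u x)⁻¹.toReal)) - pinvInf)

/-- Tempered distributions on `ℝ^n`. -/
abbrev TemperedDist (n : ℕ) : Type := SchwartzMap (Rn n) ℂ →L[ℂ] ℂ

lemma hasTemperateGrowth_reflectTranslate (y : Rn n) :
    Function.HasTemperateGrowth (fun z : Rn n => y - z) := by
  have hd : Differentiable ℝ (fun z : Rn n => y - z) :=
    (differentiable_const y).sub differentiable_id
  have hfd : fderiv ℝ (fun z : Rn n => y - z)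
      = fun _ => -(ContinuousLinearMap.id ℝ (Rn n)) := by
    funext z
    rw [fderiv_const_sub, fderiv_id']
  refine Function.HasTemperateGrowth.of_fderiv (k := 1) (C := ‖y‖ + 1) ?_ hd ?_
  · rw [hfd]; exact .const _
  · intro x
    calc ‖y - x‖ ≤ ‖y‖ + ‖x‖ := norm_sub_le _ _
      _ ≤ (‖y‖ + 1) * (1 + ‖x‖) ^ 1 := by
          have h1 := norm_nonneg x
          have h2 := norm_nonneg y
          nlinarith

/-- The map `z ↦ Ψ (y - z)`, as a Schwartz function. -/
def reflectTranslate (y : Rn n) (Ψ : SchwartzMap (Rn n) ℂ) : SchwartzMap (Rn n) ℂ :=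
  SchwartzMap.compCLMOfAntilipschitz (𝕜 := ℂ) (K := 1)
    (hasTemperateGrowth_reflectTranslate y)
    ((Isometry.of_dist_eq (fun z z' => dist_sub_left y z z')).antilipschitz) Ψ

@[simp] lemma reflectTranslate_apply (y : Rn n) (Ψ : SchwartzMap (Rn n) ℂ) (z : Rn n) :
    reflectTranslate y Ψ z = Ψ (y - z) := rfl

/-- The convolution `(Ψ ∗ f)(y) = f(Ψ(y - ·))` of a Schwartz function `Ψ` with a tempered
distribution `f`. -/
def distConv (Ψ : SchwartzMap (Rn n) ℂ) (f : TemperedDist n) (y : Rn n) : ℂ :=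
  f (reflectTranslate y Ψ)

/-- The Peetre maximal function at level `j`, with parameter `a`, of a function `F`
(to be applied with `F = Ψ_j ∗ f`):  `sup_y ‖F y‖ / (1 + |2^j (y - x)|^a)`. -/
def peetreMax (a : ℝ) (j : ℕ) (F : Rn n → ℂ) (x : Rn n) : ℝ≥0∞ :=
  ⨆ y : Rn n, (‖F y‖₊ : ℝ≥0∞) / ENNReal.ofReal (1 + ((2 : ℝ) ^ j * ‖y - x‖) ^ a)

/-- Admissible weight sequences from the class `W^α_{α₁,α₂}`, with constant `C` in
condition (i). -/
def AdmissibleWeights (al al1 al2 C : ℝ) (w : ℕ → Rn n → ℝ) : Prop :=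
  (∀ j, Measurable (w j)) ∧
  (∀ (j : ℕ) (x y : Rn n), 0 < w j x ∧ w j x ≤ C * w j y * (1 + 2 ^ j * ‖x - y‖) ^ al) ∧
  (∀ (j : ℕ) (x : Rn n), 2 ^ al1 * w j x ≤ w (j + 1) x ∧ w (j + 1) x ≤ 2 ^ al2 * w j x)

/-- An admissible pair `(φ̌, Φ̌)`, described through the generating functions `φ, Φ`. -/
def AdmissiblePair (phi Phi : SchwartzMap (Rn n) ℂ) : Prop :=
  (Function.support ⇑phi ⊆ {x : Rn n | 1 / 2 ≤ ‖x‖ ∧ ‖x‖ ≤ 2}) ∧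
  (Function.support ⇑Phi ⊆ {x : Rn n | ‖x‖ ≤ 2}) ∧
  ∃ c > 0, (∀ x : Rn n, 3 / 5 ≤ ‖x‖ → ‖x‖ ≤ 5 / 3 → c ≤ ‖phi x‖) ∧
    (∀ x : Rn n, ‖x‖ ≤ 5 / 3 → c ≤ ‖Phi x‖)


/-- The weight `2^k (1 + 2^ν |x|)`, as an extended nonnegative real number. -/
def dyadicWeight (ν k : ℕ) (x : Rn n) : ℝ≥0∞ := ENNReal.ofReal (2 ^ k * (1 + 2 ^ ν * ‖x‖))

lemma one_le_dyadicWeight (ν k : ℕ) (x : Rn n) : 1 ≤ dyadicWeight ν k x := by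
  rw [dyadicWeight, ENNReal.one_le_ofReal]
  exact one_le_mul_of_one_le_of_one_le (one_le_pow₀ one_le_two)
    (le_add_of_nonneg_right (by positivity))

lemma dyadicWeight_ne_top (ν k : ℕ) (x : Rn n) : dyadicWeight ν k x ≠ ∞ := ENNReal.ofReal_ne_top

lemma dyadicWeight_ne_zero (ν k : ℕ) (x : Rn n) : dyadicWeight ν k x ≠ 0 :=
  (zero_lt_one.trans_le (one_le_dyadicWeight ν k x)).ne'

lemma measurable_dyadicWeight (ν k : ℕ) : Measurable (dyadicWeight (n := n) ν k) := by
  unfold dyadicWeight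
  fun_prop

lemma dyadicWeight_add_le (ν j i : ℕ) (x y z : Rn n) :
    dyadicWeight ν (j + i) (x - z) ≤
      dyadicWeight ν j (x - y) * dyadicWeight (ν + j) i (y - z) := by
  unfold dyadicWeight
  rw [← ENNReal.ofReal_mul (by positivity)]
  refine ENNReal.ofReal_le_ofReal ?_
  have h : ‖x - z‖ ≤ ‖x - y‖ + ‖y - z‖ := norm_sub_le_norm_sub_add_norm_sub x y z
  have h1 : (1 : ℝ) ≤ 2 ^ j := one_le_pow₀ one_le_two
  have h2 : 0 ≤ (2 : ℝ) ^ ν * ‖y - z‖ := by positivity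
  have h3 : 0 ≤ (2 : ℝ) ^ ν * ‖x - y‖ := by positivity
  have key : 1 + (2 : ℝ) ^ ν * ‖x - z‖ ≤
      (1 + 2 ^ ν * ‖x - y‖) * (1 + 2 ^ (ν + j) * ‖y - z‖) := by
    have e : (2 : ℝ) ^ (ν + j) * ‖y - z‖ = 2 ^ j * (2 ^ ν * ‖y - z‖) := by ring
    rw [e]
    have h4 : (2 : ℝ) ^ ν * ‖y - z‖ ≤ 2 ^ j * (2 ^ ν * ‖y - z‖) := le_mul_of_one_le_left h2 h1
    have h5 : (2 : ℝ) ^ ν * ‖x - z‖ ≤ 2 ^ ν * ‖x - y‖ + 2 ^ ν * ‖y - z‖ := by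
      rw [← mul_add]; gcongr
    have h6 : 0 ≤ (2 : ℝ) ^ ν * ‖x - y‖ * (2 ^ j * (2 ^ ν * ‖y - z‖)) := by positivity
    nlinarith
  calc (2 : ℝ) ^ (j + i) * (1 + 2 ^ ν * ‖x - z‖)
      ≤ 2 ^ (j + i) * ((1 + 2 ^ ν * ‖x - y‖) * (1 + 2 ^ (ν + j) * ‖y - z‖)) := by gcongr
    _ = _ := by ring

/-- The normalized quantity `(2^k (1 + 2^ν |x - z|))^{-A} G_{ν+k}(z)`. -/
def damped (A : ℕ) (G : ℕ → Rn n → ℝ≥0∞) (ν : ℕ) (x : Rn n) (k : ℕ) (z : Rn n) : ℝ≥0∞ :=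
  (dyadicWeight ν k (x - z) ^ A)⁻¹ * G (ν + k) z

/-- The maximal function `sup_{k,z} (2^k (1 + 2^ν |x - z|))^{-A} G_{ν+k}(z)`. -/
def dampedSup (A : ℕ) (G : ℕ → Rn n → ℝ≥0∞) (ν : ℕ) (x : Rn n) : ℝ≥0∞ :=
  ⨆ (k : ℕ) (z : Rn n), damped A G ν x k z

/-- The sum `∑_k 2^{(ν+k)n} ∫ ((2^k (1 + 2^ν |x - z|))^{-A} G_{ν+k}(z))^t dz`. -/
def dampedSum (t : ℝ) (A : ℕ) (G : ℕ → Rn n → ℝ≥0∞) (ν : ℕ) (x : Rn n) : ℝ≥0∞ :=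
  ∑' k : ℕ, ∫⁻ z, 2 ^ ((ν + k) * n) * damped A G ν x k z ^ t

/-- The estimate satisfied by `G_ν = |Ψ_ν ∗ f|` as a consequence of the local reproducing
formula. -/
def Reproducing (C : ℕ → ℝ≥0∞) (G : ℕ → Rn n → ℝ≥0∞) : Prop :=
  ∀ (A ν : ℕ) (y : Rn n), G ν y ≤ C A * ∑' i : ℕ, ∫⁻ z, 2 ^ (ν * n) * damped A G ν y i z

lemma damped_le_dampedSup (A : ℕ) (G : ℕ → Rn n → ℝ≥0∞) (ν : ℕ) (x : Rn n) (k : ℕ) (z : Rn n) :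
    damped A G ν x k z ≤ dampedSup A G ν x := le_iSup₂ (f := fun k z => damped A G ν x k z) k z

lemma le_dampedSup (A : ℕ) (G : ℕ → Rn n → ℝ≥0∞) (ν : ℕ) (x : Rn n) :
    G ν x ≤ dampedSup A G ν x := by
  simpa [damped, dyadicWeight] using damped_le_dampedSup A G ν x 0 x

lemma damped_damped_le (A : ℕ) (G : ℕ → Rn n → ℝ≥0∞) (ν j i : ℕ) (x y z : Rn n) :
    (dyadicWeight ν j (x - y) ^ A)⁻¹ * damped A G (ν + j) y i z ≤ damped A G ν x (j + i) z := by
  unfold damped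
  rw [← mul_assoc, ← ENNReal.mul_inv (by simp [dyadicWeight_ne_zero])
    (by simp [dyadicWeight_ne_top]), ← mul_pow, add_assoc]
  gcongr
  exact dyadicWeight_add_le ν j i x y z

lemma tsum_add_left_le (f : ℕ → ℝ≥0∞) (j : ℕ) : ∑' i, f (j + i) ≤ ∑' i, f i :=
  ENNReal.tsum_comp_le_tsum_of_injective (add_right_injective j) f

lemma damped_anti {A A' : ℕ} (h : A ≤ A') (G : ℕ → Rn n → ℝ≥0∞) (ν : ℕ) (x : Rn n) (k : ℕ)
    (z : Rn n) : damped A' G ν x k z ≤ damped A G ν x k z := by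
  unfold damped
  gcongr
  exact one_le_dyadicWeight _ _ _

lemma dampedSum_anti {t : ℝ} (ht : 0 < t) {A A' : ℕ} (h : A ≤ A') (G : ℕ → Rn n → ℝ≥0∞) (ν : ℕ)
    (x : Rn n) : dampedSum t A' G ν x ≤ dampedSum t A G ν x := by
  unfold dampedSum
  gcongr
  exact damped_anti h _ _ _ _ _

lemma measurable_damped (A : ℕ) {G : ℕ → Rn n → ℝ≥0∞} (hG : ∀ m, Measurable (G m)) (ν : ℕ)
    (x : Rn n) (k : ℕ) : Measurable (damped A G ν x k) := by
  unfold damped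
  have h := measurable_dyadicWeight (n := n) ν k
  have h' := hG (ν + k)
  fun_prop

lemma dampedSum_shift_le {t : ℝ} (ht : 0 < t) (A : ℕ) (G : ℕ → Rn n → ℝ≥0∞) (ν j : ℕ)
    (x y : Rn n) :
    ((dyadicWeight ν j (x - y) ^ A)⁻¹) ^ t * dampedSum t A G (ν + j) y ≤ dampedSum t A G ν x := by
  have hfin : ((dyadicWeight ν j (x - y) ^ A)⁻¹) ^ t ≠ ∞ := by
    refine ENNReal.rpow_ne_top_of_nonneg ht.le ?_
    simp [dyadicWeight_ne_zero]
  unfold dampedSum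
  rw [← ENNReal.tsum_mul_left]
  refine le_trans ?_ (tsum_add_left_le _ j)
  gcongr with i
  rw [← lintegral_const_mul' _ _ hfin]
  refine lintegral_mono fun z => ?_
  rw [mul_left_comm, ← ENNReal.mul_rpow_of_nonneg _ _ ht.le, add_assoc]
  dsimp only
  gcongr
  exact damped_damped_le A G ν j i x y z

lemma dampedSup_le_of_le_one {t : ℝ} (ht : 0 < t) (ht1 : t ≤ 1) {C : ℕ → ℝ≥0∞} {A : ℕ}
    {G : ℕ → Rn n → ℝ≥0∞} (hG : ∀ m, Measurable (G m))
    (hrep : Reproducing C G) (ν : ℕ) (x : Rn n) :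
    dampedSup A G ν x ≤ C A * (dampedSup A G ν x ^ (1 - t) * dampedSum t A G ν x) := by
  conv_lhs => rw [dampedSup]
  refine iSup₂_le fun j y => ?_
  have hfin : (dyadicWeight ν j (x - y) ^ A)⁻¹ ≠ ∞ := by simp [dyadicWeight_ne_zero]
  have hmeas (k : ℕ) : Measurable fun z => (2 : ℝ≥0∞) ^ ((ν + k) * n) * damped A G ν x k z ^ t :=
    ((measurable_damped A hG ν x k).pow_const t).const_mul _
  calc damped A G ν x j y
      ≤ (dyadicWeight ν j (x - y) ^ A)⁻¹ *
          (C A * ∑' i : ℕ, ∫⁻ z, 2 ^ ((ν + j) * n) * damped A G (ν + j) y i z) := by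
        rw [damped]
        gcongr
        exact hrep A (ν + j) y
    _ = C A * ∑' i : ℕ, ∫⁻ z, 2 ^ ((ν + j) * n) *
          ((dyadicWeight ν j (x - y) ^ A)⁻¹ * damped A G (ν + j) y i z) := by
        rw [mul_left_comm, ← ENNReal.tsum_mul_left]
        simp_rw [← lintegral_const_mul' _ _ hfin, mul_left_comm]
    _ ≤ C A * ∑' i : ℕ, dampedSup A G ν x ^ (1 - t) *
          ∫⁻ z, 2 ^ ((ν + (j + i)) * n) * damped A G ν x (j + i) z ^ t := by
        gcongr with i
        rw [← lintegral_const_mul _ (hmeas (j + i))]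
        refine lintegral_mono fun z => ?_
        rw [mul_left_comm (dampedSup A G ν x ^ (1 - t))]
        refine mul_le_mul' (pow_le_pow_right₀ one_le_two (by gcongr; omega)) ?_
        · refine (damped_damped_le A G ν j i x y z).trans ?_
          set g := damped A G ν x (j + i) z
          have hg : g ≤ dampedSup A G ν x := damped_le_dampedSup A G ν x (j + i) z
          calc g = g ^ ((1 - t) + t) := by simp
            _ = g ^ (1 - t) * g ^ t := ENNReal.rpow_add_of_nonneg _ _ (by linarith) ht.le
            _ ≤ _ := by
              gcongr
    _ ≤ _ := by
        rw [ENNReal.tsum_mul_left]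
        gcongr
        exact tsum_add_left_le
          (fun k => ∫⁻ z, 2 ^ ((ν + k) * n) * damped A G ν x k z ^ t) j

lemma rpow_le_of_le_mul_rpow_one_sub {t : ℝ} (ht : 0 < t) {M S : ℝ≥0∞} (hM : M ≠ ∞)
    (h : M ≤ M ^ (1 - t) * S) : M ^ t ≤ S := by
  rcases eq_or_ne M 0 with rfl | h0
  · simp [ht]
  have h1 : M ^ (t - 1) * M ≤ M ^ (t - 1) * (M ^ (1 - t) * S) := by gcongr
  rw [← mul_assoc, ← ENNReal.rpow_add _ _ h0 hM] at h1
  have h2 : M ^ (t - 1) * M = M ^ t := by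
    conv_lhs => rw [← ENNReal.rpow_one M, ← ENNReal.rpow_mul, ← ENNReal.rpow_add _ _ h0 hM]
    ring_nf
  rw [h2] at h1
  simpa using h1

lemma rpow_le_dampedSum_of_le_one {t : ℝ} (ht : 0 < t) (ht1 : t ≤ 1) {C : ℕ → ℝ≥0∞}
    (hC : ∀ A, C A ≠ ∞) {G : ℕ → Rn n → ℝ≥0∞} (hG : ∀ m, Measurable (G m))
    (hrep : Reproducing C G)
    (hgrowth : ∃ A₀, ∀ A ≥ A₀, ∀ ν x, dampedSup A G ν x ≠ ∞) (A ν : ℕ) (x : Rn n) :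
    G ν x ^ t ≤ C A * dampedSum t A G ν x := by
  have key (A ν : ℕ) (x : Rn n) (hM : dampedSup A G ν x ≠ ∞) :
      G ν x ^ t ≤ C A * dampedSum t A G ν x := by
    refine (ENNReal.rpow_le_rpow (le_dampedSup A G ν x) ht.le).trans
      (rpow_le_of_le_mul_rpow_one_sub ht hM ?_)
    rw [mul_left_comm]
    exact dampedSup_le_of_le_one ht ht1 hG hrep ν x
  by_cases hS : dampedSum t A G ν x = ∞
  · rcases eq_or_ne (C A) 0 with h0 | h0
    · have := hrep A ν x
      simp only [h0, zero_mul, nonpos_iff_eq_zero] at this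
      simp [this, ht]
    · simp [hS, ENNReal.mul_top h0]
  refine key A ν x ?_
  obtain ⟨A₀, hA₀⟩ := hgrowth
  set A' := max A A₀
  have hbound : dampedSup A G ν x ≤ (C A' * dampedSum t A G ν x) ^ t⁻¹ := by
    refine iSup₂_le fun j y => ?_
    rw [ENNReal.le_rpow_inv_iff ht, damped, ENNReal.mul_rpow_of_nonneg _ _ ht.le]
    calc _ ≤ ((dyadicWeight ν j (x - y) ^ A)⁻¹) ^ t * (C A' * dampedSum t A' G (ν + j) y) := by
          gcongr
          exact key A' (ν + j) y (hA₀ A' (le_max_right _ _) _ _)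
      _ ≤ ((dyadicWeight ν j (x - y) ^ A)⁻¹) ^ t * (C A' * dampedSum t A G (ν + j) y) := by
          gcongr
          exact dampedSum_anti ht (le_max_left _ _) _ _ _
      _ ≤ _ := by
          rw [mul_left_comm]
          gcongr
          exact dampedSum_shift_le ht A G ν j x y
  exact ne_top_of_le_ne_top
    (ENNReal.rpow_ne_top_of_nonneg (by positivity) (ENNReal.mul_ne_top (hC _) hS)) hbound

lemma le_add_mul_rpow {t : ℝ} (ht : 1 ≤ t) {l : ℝ≥0∞} (hl : l ≠ 0) (hl' : l ≠ ∞) (h : ℝ≥0∞) :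
    h ≤ l + l ^ (1 - t) * h ^ t := by
  rcases le_total h l with h1 | h1
  · exact h1.trans le_self_add
  rcases eq_or_ne h ∞ with rfl | ht'
  · have h3 : l ^ (1 - t) ≠ 0 := by simp [ENNReal.rpow_eq_zero_iff, hl, hl']
    rw [ENNReal.top_rpow_of_pos (by linarith), ENNReal.mul_top h3]
    simp
  have h0 : h ≠ 0 := fun h0 => hl (by simpa [h0] using h1)
  refine le_trans ?_ le_add_self
  calc h = h ^ (1 - t) * h ^ t := by
        rw [← ENNReal.rpow_add _ _ h0 ht']; simp
    _ ≤ _ := by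
        refine mul_le_mul_left ?_ _
        rw [← neg_sub, ENNReal.rpow_neg, ENNReal.rpow_neg]
        gcongr

/-- A form of Jensen's inequality for a series of integrals. -/
lemma tsum_lintegral_mul_rpow_le {t : ℝ} (ht : 1 ≤ t) {d h : ℕ → Rn n → ℝ≥0∞}
    (hd : ∀ i, Measurable (d i)) (hh : ∀ i, Measurable (h i)) {m : ℝ≥0∞}
    (hm : ∑' i, ∫⁻ z, d i z ≤ m) :
    (∑' i, ∫⁻ z, d i z * h i z) ^ t ≤ (m + 1) ^ t * ∑' i, ∫⁻ z, d i z * h i z ^ t := by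
  have ht0 : 0 < t := by linarith
  set T := ∑' i, ∫⁻ z, d i z * h i z ^ t with hT
  have key (l : ℝ≥0∞) (hl : l ≠ 0) (hl' : l ≠ ∞) :
      ∑' i, ∫⁻ z, d i z * h i z ≤ l * m + l ^ (1 - t) * T := by
    calc ∑' i, ∫⁻ z, d i z * h i z
        ≤ ∑' i, ∫⁻ z, (l * d i z + l ^ (1 - t) * (d i z * h i z ^ t)) := by
          gcongr with i z
          calc d i z * h i z ≤ d i z * (l + l ^ (1 - t) * h i z ^ t) := by
                gcongr
                exact le_add_mul_rpow ht hl hl' _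
            _ = _ := by ring
      _ = l * (∑' i, ∫⁻ z, d i z) + l ^ (1 - t) * T := by
          rw [hT, ← ENNReal.tsum_mul_left, ← ENNReal.tsum_mul_left, ← ENNReal.tsum_add]
          congr 1 with i
          rw [lintegral_add_left ((hd i).const_mul _), lintegral_const_mul _ (hd i),
            lintegral_const_mul (l ^ (1 - t)) (f := fun z => d i z * h i z ^ t)
              ((hd i).mul ((hh i).pow_const t))]
      _ ≤ _ := by gcongr
  have hm1 : m + 1 ≠ 0 := by simp
  rcases eq_or_ne T ∞ with h1 | h1
  · rw [h1, ENNReal.mul_top (by simp [ENNReal.rpow_eq_zero_iff, hm1, ht0.not_gt])]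
    exact le_top
  rcases eq_or_ne T 0 with h0 | h0
  · have hz : ∑' i, ∫⁻ z, d i z * h i z = 0 := by
      rw [h0] at hT
      have h2 := ENNReal.tsum_eq_zero.1 hT.symm
      refine ENNReal.tsum_eq_zero.2 fun i => ?_
      have h3 := (lintegral_eq_zero_iff ((hd i).mul ((hh i).pow_const t))).1 (h2 i)
      refine (lintegral_eq_zero_iff ((hd i).mul (hh i))).2 ?_
      filter_upwards [h3] with z hz
      simp only [Pi.zero_apply, mul_eq_zero, ENNReal.rpow_eq_zero_iff, Pi.mul_apply] at hz ⊢
      rcases hz with hz | hz | hz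
      · exact Or.inl hz
      · exact Or.inr hz.1
      · linarith [hz.2]
    simp [hz, ht0]
  have h2 := key (T ^ t⁻¹) (by simp [ENNReal.rpow_eq_zero_iff, h0, h1])
    (ENNReal.rpow_ne_top_of_nonneg (by positivity) h1)
  have h3 : (T ^ t⁻¹) ^ (1 - t) * T = T ^ t⁻¹ := by
    rw [← ENNReal.rpow_mul]
    nth_rewrite 2 [← ENNReal.rpow_one T]
    rw [← ENNReal.rpow_add _ _ h0 h1]
    congr 1
    field_simp
    ring
  rw [h3] at h2
  calc (∑' i, ∫⁻ z, d i z * h i z) ^ t ≤ (T ^ t⁻¹ * m + T ^ t⁻¹) ^ t := by gcongr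
    _ = ((m + 1) * T ^ t⁻¹) ^ t := by ring_nf
    _ = _ := by
      rw [ENNReal.mul_rpow_of_nonneg _ _ ht0.le, ENNReal.rpow_inv_rpow ht0.ne']

lemma lintegral_comp_two_pow_smul (ν : ℕ) {g : Rn n → ℝ≥0∞} (hg : Measurable g) :
    2 ^ (ν * n) * ∫⁻ z, g ((2 : ℝ) ^ ν • z) = ∫⁻ z, g z := by
  have h2 : ((2 : ℝ) ^ ν) ≠ 0 := by positivity
  have h := lintegral_map (μ := (volume : Measure (Rn n))) hg
    (measurable_const_smul ((2 : ℝ) ^ ν))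
  rw [Measure.map_addHaar_smul _ h2, lintegral_smul_measure] at h
  rw [← h, finrank_euclideanSpace_fin, smul_eq_mul, ← mul_assoc, ← pow_mul,
    abs_of_pos (by positivity), ENNReal.ofReal_inv_of_pos (by positivity), ENNReal.ofReal_pow (by norm_num),
    ENNReal.ofReal_ofNat, ENNReal.mul_inv_cancel (by simp) (by simp), one_mul]

lemma lintegral_dyadicWeight (ν i : ℕ) (x : Rn n) :
    ∫⁻ z, 2 ^ (ν * n) * (dyadicWeight ν i (x - z) ^ (n + 1))⁻¹ ≤
      (2⁻¹ : ℝ≥0∞) ^ i * ∫⁻ z : Rn n, ENNReal.ofReal ((1 + ‖z‖) ^ (-((n : ℝ) + 1))) := by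
  have hpt (z : Rn n) : (dyadicWeight ν i z ^ (n + 1))⁻¹ ≤
      (2⁻¹ : ℝ≥0∞) ^ i * ENNReal.ofReal ((1 + ‖(2 : ℝ) ^ ν • z‖) ^ (-((n : ℝ) + 1))) := by
    have e : ((1 : ℝ) + ‖(2 : ℝ) ^ ν • z‖) ^ (-((n : ℝ) + 1))
        = ((1 + 2 ^ ν * ‖z‖) ^ (n + 1))⁻¹ := by
      rw [norm_smul, Real.norm_of_nonneg (by positivity), Real.rpow_neg (by positivity)]
      norm_cast
    rw [e, ENNReal.ofReal_inv_of_pos (by positivity), ENNReal.ofReal_pow (by positivity),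
      ← ENNReal.inv_pow, ← ENNReal.mul_inv (by simp) (by simp), dyadicWeight,
      ENNReal.ofReal_mul (by positivity), mul_pow, ENNReal.ofReal_pow (by norm_num),
      ENNReal.ofReal_ofNat]
    exact ENNReal.inv_le_inv.2 (mul_le_mul_left
      (le_self_pow₀ (one_le_pow₀ (one_le_two (α := ℝ≥0∞))) n.succ_ne_zero) _)
  have hmeas : Measurable fun z : Rn n => ENNReal.ofReal ((1 + ‖z‖) ^ (-((n : ℝ) + 1))) := by
    fun_prop
  calc _ = ∫⁻ z, 2 ^ (ν * n) * (dyadicWeight ν i z ^ (n + 1))⁻¹ :=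
        lintegral_sub_left_eq_self
          (fun z : Rn n => 2 ^ (ν * n) * (dyadicWeight ν i z ^ (n + 1))⁻¹) x
    _ ≤ ∫⁻ z : Rn n, 2 ^ (ν * n) * ((2⁻¹ : ℝ≥0∞) ^ i *
          ENNReal.ofReal ((1 + ‖(2 : ℝ) ^ ν • z‖) ^ (-((n : ℝ) + 1)))) := by
        gcongr with z
        exact hpt z
    _ = _ := by
        rw [← lintegral_comp_two_pow_smul ν hmeas, lintegral_const_mul' _ _ (by simp),
          lintegral_const_mul' _ _ (by simp), mul_left_comm]

lemma tsum_lintegral_dyadicWeight (ν : ℕ) (x : Rn n) :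
    ∑' i : ℕ, ∫⁻ z, 2 ^ (ν * n) * (dyadicWeight ν i (x - z) ^ (n + 1))⁻¹ ≤
      2 * ∫⁻ z : Rn n, ENNReal.ofReal ((1 + ‖z‖) ^ (-((n : ℝ) + 1))) := by
  calc _ ≤ ∑' i : ℕ, (2⁻¹ : ℝ≥0∞) ^ i *
          ∫⁻ z : Rn n, ENNReal.ofReal ((1 + ‖z‖) ^ (-((n : ℝ) + 1))) := by
        gcongr
        exact lintegral_dyadicWeight _ _ _
    _ = _ := by
        rw [ENNReal.tsum_mul_right, ENNReal.tsum_geometric, ENNReal.one_sub_inv_two, inv_inv]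

lemma rpow_le_dampedSum_of_one_le {t : ℝ} (ht : 1 ≤ t) {C : ℕ → ℝ≥0∞}
    {G : ℕ → Rn n → ℝ≥0∞} (hG : ∀ m, Measurable (G m))
    (hrep : Reproducing C G) (A ν : ℕ) (x : Rn n) :
    G ν x ^ t ≤ (C (A + (n + 1)) *
      (2 * (∫⁻ z : Rn n, ENNReal.ofReal ((1 + ‖z‖) ^ (-((n : ℝ) + 1)))) + 1)) ^ t *
        dampedSum t A G ν x := by
  have ht0 : 0 ≤ t := by linarith
  have hd (i : ℕ) : Measurable fun z : Rn n =>
      2 ^ (ν * n) * (dyadicWeight ν i (x - z) ^ (n + 1))⁻¹ := by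
    have h := measurable_dyadicWeight (n := n) ν i
    fun_prop
  have h1 := tsum_lintegral_mul_rpow_le ht hd (fun i => measurable_damped A hG ν x i)
    (tsum_lintegral_dyadicWeight ν x)
  have h2 (i : ℕ) (z : Rn n) : 2 ^ (ν * n) * damped (A + (n + 1)) G ν x i z =
      2 ^ (ν * n) * (dyadicWeight ν i (x - z) ^ (n + 1))⁻¹ * damped A G ν x i z := by
    unfold damped
    rw [pow_add, ENNReal.mul_inv (by simp [dyadicWeight_ne_zero])
      (by simp [dyadicWeight_ne_top])]
    ring
  have h3 := hrep (A + (n + 1)) ν x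
  simp_rw [h2] at h3
  calc G ν x ^ t ≤ (C (A + (n + 1)) * ∑' i, ∫⁻ z,
        2 ^ (ν * n) * (dyadicWeight ν i (x - z) ^ (n + 1))⁻¹ * damped A G ν x i z) ^ t := by
        gcongr
    _ ≤ _ := by
        rw [ENNReal.mul_rpow_of_nonneg _ _ ht0, ENNReal.mul_rpow_of_nonneg _ _ ht0, mul_assoc]
        refine mul_le_mul_right (h1.trans ?_) _
        unfold dampedSum
        gcongr with i z
        refine (mul_le_of_le_one_right' ?_).trans
          (pow_le_pow_right₀ one_le_two (by gcongr; omega))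
        exact ENNReal.inv_le_one.2 (one_le_pow₀ (one_le_dyadicWeight _ _ _))

/-- The power-`t` estimate deduced from the reproducing inequality, with a constant that does not
depend on the family `G`. -/
lemma exists_rpow_le_dampedSum {t : ℝ} (ht : 0 < t) {C : ℕ → ℝ≥0∞} (hC : ∀ A, C A ≠ ∞) (A : ℕ) :
    ∃ K : ℝ≥0∞, K ≠ ∞ ∧ ∀ G : ℕ → Rn n → ℝ≥0∞, (∀ m, Measurable (G m)) → Reproducing C G →
      (∃ A₀, ∀ A ≥ A₀, ∀ ν x, dampedSup A G ν x ≠ ∞) →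
      ∀ ν x, G ν x ^ t ≤ K * dampedSum t A G ν x := by
  rcases le_total t 1 with ht1 | ht1
  · exact ⟨C A, hC A, fun G hG hrep hgr ν x =>
      rpow_le_dampedSum_of_le_one ht ht1 hC hG hrep hgr A ν x⟩
  · refine ⟨_, ?_, fun G hG hrep _ ν x => rpow_le_dampedSum_of_one_le ht1 hG hrep A ν x⟩
    refine ENNReal.rpow_ne_top_of_nonneg ht.le (ENNReal.mul_ne_top (hC _) ?_)
    refine ENNReal.add_ne_top.2 ⟨ENNReal.mul_ne_top (by simp) ?_, by simp⟩
    exact (finite_integral_one_add_norm (by simp)).ne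

lemma AdmissibleWeights.two_rpow_mul_le {al al1 al2 C : ℝ} {w : ℕ → Rn n → ℝ}
    (hw : AdmissibleWeights al al1 al2 C w) (ν k : ℕ) (x : Rn n) :
    2 ^ ((k : ℝ) * al1) * w ν x ≤ w (ν + k) x := by
  induction k with
  | zero => simp
  | succ k ih =>
    calc (2 : ℝ) ^ (((k + 1 : ℕ) : ℝ) * al1) * w ν x
        = 2 ^ al1 * (2 ^ ((k : ℝ) * al1) * w ν x) := by
          rw [← mul_assoc, ← Real.rpow_add two_pos]; push_cast; ring_nf
      _ ≤ 2 ^ al1 * w (ν + k) x := by gcongr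
      _ ≤ _ := (hw.2.2 (ν + k) x).1

lemma AdmissibleWeights.const_pos {al al1 al2 C : ℝ} {w : ℕ → Rn n → ℝ}
    (hw : AdmissibleWeights al al1 al2 C w) : 0 < C := by
  have h := hw.2.1 0 0 0
  have h2 := h.2
  simp only [sub_self, norm_zero, mul_zero, add_zero, Real.one_rpow, mul_one] at h2
  nlinarith [h.1]

lemma one_add_rpow_le {a s : ℝ} (ha : 0 ≤ a) (hs : 0 ≤ s) :
    (1 + s) ^ a ≤ 2 ^ a * (1 + s ^ a) := by
  rcases le_total s 1 with h | h
  · calc (1 + s) ^ a ≤ 2 ^ a := by gcongr; linarith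
      _ ≤ 2 ^ a * (1 + s ^ a) :=
        le_mul_of_one_le_right (by positivity) (le_add_of_nonneg_right (by positivity))
  · calc (1 + s) ^ a ≤ (2 * s) ^ a := by gcongr; linarith
      _ = 2 ^ a * s ^ a := Real.mul_rpow (by norm_num) hs
      _ ≤ _ := by gcongr; linarith

lemma weighted_kernel_le {al al1 al2 C : ℝ} (hal : 0 ≤ al) {w : ℕ → Rn n → ℝ}
    (hw : AdmissibleWeights al al1 al2 C w) {N : ℕ} {a : ℝ} (ha : al < a) (haN : a ≤ N)
    (ν k : ℕ) (x y z : Rn n) :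
    ((2 ^ k * (1 + 2 ^ ν * ‖y - z‖)) ^ N)⁻¹ * (1 + ((2 : ℝ) ^ ν * ‖y - x‖) ^ a)⁻¹ * w ν x ≤
      2 ^ a * C * (2 ^ (-(k : ℝ) * (N - a + al1)) *
        ((1 + 2 ^ (ν + k) * ‖x - z‖) ^ (-(a - al)) * w (ν + k) z)) := by
  have ha0 : 0 < a := hal.trans_lt ha
  have hC := hw.const_pos
  have hwz := (hw.2.1 (ν + k) z z).1
  have hwx := (hw.2.1 ν x x).1
  set r := (2 : ℝ) ^ ν * ‖y - z‖ with hr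
  set s := (2 : ℝ) ^ ν * ‖y - x‖ with hs
  set q := 1 + (2 : ℝ) ^ (ν + k) * ‖x - z‖ with hq
  have hr0 : 0 ≤ r := by positivity
  have hs0 : 0 ≤ s := by positivity
  have hq1 : 1 ≤ q := le_add_of_nonneg_right (by positivity)
  have h1 : w ν x ≤ 2 ^ (-((k : ℝ) * al1)) * (C * w (ν + k) z * q ^ al) := by
    rw [Real.rpow_neg two_pos.le, ← div_eq_inv_mul, le_div_iff₀' (by positivity)]
    exact (hw.two_rpow_mul_le ν k x).trans (hw.2.1 (ν + k) x z).2
  have h2 : ((2 ^ k * (1 + r)) ^ N)⁻¹ ≤ (2 : ℝ) ^ (-((k : ℝ) * N)) * (1 + r) ^ (-a) := by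
    rw [mul_pow, mul_inv, Real.rpow_neg two_pos.le, Real.rpow_neg (by positivity), ← pow_mul,
      ← Nat.cast_mul, Real.rpow_natCast]
    gcongr
    rw [← Real.rpow_natCast]
    exact Real.rpow_le_rpow_of_exponent_le (by linarith) haN
  have h3 : (1 + s ^ a)⁻¹ ≤ 2 ^ a * (1 + s) ^ (-a) := by
    rw [Real.rpow_neg (by positivity), ← div_eq_mul_inv, le_div_iff₀ (by positivity),
      ← div_eq_inv_mul, div_le_iff₀ (by positivity)]
    exact one_add_rpow_le ha0.le hs0
  have hqrs : q ≤ 2 ^ k * ((1 + r) * (1 + s)) := by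
    have e : ‖x - z‖ ≤ ‖y - x‖ + ‖y - z‖ := by
      rw [norm_sub_rev y x]; exact norm_sub_le_norm_sub_add_norm_sub x y z
    have h5 : (2 : ℝ) ^ ν * ‖x - z‖ ≤ s + r := by
      rw [hr, hs, ← mul_add]; gcongr
    have h6 : (1 : ℝ) ≤ 2 ^ k := one_le_pow₀ one_le_two
    have h7 : q = 1 + 2 ^ k * ((2 : ℝ) ^ ν * ‖x - z‖) := by rw [hq]; ring
    rw [h7]
    have h8 : (2 : ℝ) ^ k * ((2 : ℝ) ^ ν * ‖x - z‖) ≤ 2 ^ k * (s + r) := by gcongr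
    have h9 : 0 ≤ (2 : ℝ) ^ k * (r * s) := by positivity
    nlinarith
  have h4 : (1 + r) ^ (-a) * (1 + s) ^ (-a) ≤ (2 : ℝ) ^ ((k : ℝ) * a) * q ^ (-a) := by
    rw [← Real.mul_rpow (by positivity) (by positivity), Real.rpow_mul two_pos.le,
      Real.rpow_natCast, Real.rpow_neg (by positivity), Real.rpow_neg (by positivity),
      ← div_eq_mul_inv, le_div_iff₀ (by positivity), ← div_eq_inv_mul,
      div_le_iff₀ (by positivity), ← Real.mul_rpow (by positivity) (by positivity)]
    gcongr
  calc _ ≤ (2 : ℝ) ^ (-((k : ℝ) * N)) * (1 + r) ^ (-a) * (2 ^ a * (1 + s) ^ (-a)) *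
        (2 ^ (-((k : ℝ) * al1)) * (C * w (ν + k) z * q ^ al)) := by gcongr
    _ = (2 : ℝ) ^ (-((k : ℝ) * N)) * 2 ^ a * ((1 + r) ^ (-a) * (1 + s) ^ (-a)) *
        (2 ^ (-((k : ℝ) * al1)) * (C * w (ν + k) z * q ^ al)) := by ring
    _ ≤ (2 : ℝ) ^ (-((k : ℝ) * N)) * 2 ^ a * ((2 : ℝ) ^ ((k : ℝ) * a) * q ^ (-a)) *
        (2 ^ (-((k : ℝ) * al1)) * (C * w (ν + k) z * q ^ al)) := by gcongr
    _ = 2 ^ a * C * (2 ^ (-((k : ℝ) * N)) * (2 : ℝ) ^ ((k : ℝ) * a) * 2 ^ (-((k : ℝ) * al1)) *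
        (q ^ (-a) * q ^ al * w (ν + k) z)) := by ring
    _ = _ := by
      rw [← Real.rpow_add two_pos, ← Real.rpow_add two_pos, ← Real.rpow_add (by positivity)]
      ring_nf

lemma peetre_le_of_rpow_le {al al1 al2 C : ℝ} (hal : 0 ≤ al) {w : ℕ → Rn n → ℝ}
    (hw : AdmissibleWeights al al1 al2 C w) {t : ℝ} (ht : 0 < t) {N : ℕ} {a : ℝ} (ha : al < a)
    (haN : a ≤ N) {K : ℝ≥0∞} (F : ℕ → Rn n → ℂ)
    (hF : ∀ ν x, (‖F ν x‖₊ : ℝ≥0∞) ^ t ≤ K * dampedSum t N (fun m z => ‖F m z‖₊) ν x)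
    (ν : ℕ) (x : Rn n) :
    (peetreMax a ν (F ν) x * ENNReal.ofReal (w ν x)) ^ t ≤
      K * ENNReal.ofReal (2 ^ a * C) ^ t * ∑' j : ℕ,
        ENNReal.ofReal ((2 : ℝ) ^ (-(j : ℝ) * (N - a + al1) * t)) *
          lconv (etaK (ν + j) ((a - al) * t))
            (fun z => ((‖F (ν + j) z‖₊ : ℝ≥0∞) * ENNReal.ofReal (w (ν + j) z)) ^ t) x := by
  have hC := hw.const_pos
  rw [← ENNReal.le_rpow_inv_iff ht, peetreMax, ENNReal.iSup_mul]
  refine iSup_le fun y => ?_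
  rw [ENNReal.le_rpow_inv_iff ht, div_eq_mul_inv, mul_assoc, ENNReal.mul_rpow_of_nonneg _ _ ht.le,
    mul_assoc]
  set P := (ENNReal.ofReal (1 + ((2 : ℝ) ^ ν * ‖y - x‖) ^ a))⁻¹ * ENNReal.ofReal (w ν x) with hP
  have hPtop : P ^ t ≠ ∞ := by
    refine ENNReal.rpow_ne_top_of_nonneg ht.le (ENNReal.mul_ne_top ?_ ENNReal.ofReal_ne_top)
    rw [ENNReal.inv_ne_top, ENNReal.ofReal_ne_zero_iff]
    positivity
  have hDtop : ENNReal.ofReal (2 ^ a * C) ^ t ≠ ∞ :=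
    ENNReal.rpow_ne_top_of_nonneg ht.le ENNReal.ofReal_ne_top
  refine (mul_le_mul_left (hF ν y) _).trans ?_
  rw [mul_assoc]
  refine mul_le_mul_right ?_ _
  rw [dampedSum, ← ENNReal.tsum_mul_right, ← ENNReal.tsum_mul_left]
  refine ENNReal.tsum_le_tsum fun k => ?_
  unfold lconv
  rw [← lintegral_mul_const' _ _ hPtop, ← lintegral_const_mul' _ _ ENNReal.ofReal_ne_top,
    ← lintegral_const_mul' _ _ hDtop]
  refine lintegral_mono fun z => ?_
  have hq : 0 < 1 + (2 : ℝ) ^ (ν + k) * ‖x - z‖ := by positivity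
  have hker : (ENNReal.ofReal (2 ^ k * (1 + 2 ^ ν * ‖y - z‖)) ^ N)⁻¹ * P ≤
      ENNReal.ofReal (2 ^ a * C) * (ENNReal.ofReal ((2 : ℝ) ^ (-(k : ℝ) * (N - a + al1))) *
        (ENNReal.ofReal ((1 + (2 : ℝ) ^ (ν + k) * ‖x - z‖) ^ (-(a - al))) *
          ENNReal.ofReal (w (ν + k) z))) := by
    rw [hP, ← ENNReal.ofReal_pow (by positivity), ← ENNReal.ofReal_inv_of_pos (by positivity),
      ← ENNReal.ofReal_inv_of_pos (by positivity), ← mul_assoc,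
      ← ENNReal.ofReal_mul (by positivity), ← ENNReal.ofReal_mul (by positivity),
      ← ENNReal.ofReal_mul (by positivity), ← ENNReal.ofReal_mul (by positivity),
      ← ENNReal.ofReal_mul (by positivity)]
    exact ENNReal.ofReal_le_ofReal (weighted_kernel_le hal hw ha haN ν k x y z)
  have hpow := ENNReal.rpow_le_rpow
    (mul_le_mul_left hker ((‖F (ν + k) z‖₊ : ℝ≥0∞))) ht.le
  have e1 : ENNReal.ofReal ((2 : ℝ) ^ (-(k : ℝ) * (N - a + al1) * t)) =
      ENNReal.ofReal ((2 : ℝ) ^ (-(k : ℝ) * (N - a + al1))) ^ t := by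
    rw [ENNReal.ofReal_rpow_of_pos (by positivity), ← Real.rpow_mul two_pos.le]
  have e2 : etaK (ν + k) ((a - al) * t) (x - z) = 2 ^ ((ν + k) * n) *
      ENNReal.ofReal ((1 + (2 : ℝ) ^ (ν + k) * ‖x - z‖) ^ (-(a - al))) ^ t := by
    rw [etaK, ENNReal.ofReal_mul (by positivity), ENNReal.ofReal_pow (by norm_num),
      ENNReal.ofReal_ofNat, ENNReal.ofReal_rpow_of_pos (by positivity),
      ← Real.rpow_mul hq.le, neg_mul]
  have e3 : damped N (fun m z => (‖F m z‖₊ : ℝ≥0∞)) ν y k z =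
      (ENNReal.ofReal (2 ^ k * (1 + 2 ^ ν * ‖y - z‖)) ^ N)⁻¹ * ‖F (ν + k) z‖₊ := rfl
  rw [e1, e2, e3]
  simp only [ENNReal.mul_rpow_of_nonneg _ _ ht.le] at hpow ⊢
  calc _ = 2 ^ ((ν + k) * n) * _ := by rw [mul_assoc]
    _ ≤ 2 ^ ((ν + k) * n) * _ := mul_le_mul_right (le_of_eq_of_le ?_ hpow) _
    _ = _ := ?_
  · ring
  · ring

open LineDeriv in
lemma lineDerivOp_reflectTranslate (y v : Rn n) (Ψ : SchwartzMap (Rn n) ℂ) :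
    ∂_{v} (reflectTranslate y Ψ) = -reflectTranslate y (∂_{v} Ψ) := by
  ext x
  have h : HasFDerivAt (reflectTranslate y Ψ)
      ((fderiv ℝ Ψ (y - x)).comp (-ContinuousLinearMap.id ℝ (Rn n))) x :=
    (Ψ.hasFDerivAt (y - x)).comp x ((hasFDerivAt_id x).const_sub y)
  rw [SchwartzMap.lineDerivOp_apply_eq_fderiv, h.fderiv]
  simp [SchwartzMap.lineDerivOp_apply_eq_fderiv]

open LineDeriv in
lemma iteratedFDeriv_reflectTranslate (y : Rn n) (l : ℕ) (Ψ : SchwartzMap (Rn n) ℂ) (x : Rn n) :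
    iteratedFDeriv ℝ l (reflectTranslate y Ψ) x =
      (-1 : ℝ) ^ l • iteratedFDeriv ℝ l Ψ (y - x) := by
  have key (l : ℕ) (m : Fin l → Rn n) : ∂^{m} (reflectTranslate y Ψ) =
      (-1 : ℝ) ^ l • reflectTranslate y (∂^{m} Ψ) := by
    induction l with
    | zero => simp
    | succ l ih =>
      rw [iteratedLineDerivOp_succ_left, ih, lineDerivOp_smul, lineDerivOp_reflectTranslate,
        ← iteratedLineDerivOp_succ_left, pow_succ, mul_smul, neg_one_smul]
  ext m
  rw [← SchwartzMap.iteratedLineDerivOp_eq_iteratedFDeriv, key]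
  simp [SchwartzMap.iteratedLineDerivOp_eq_iteratedFDeriv]

lemma norm_iteratedFDeriv_reflectTranslate (y : Rn n) (l : ℕ) (Ψ : SchwartzMap (Rn n) ℂ)
    (x : Rn n) :
    ‖iteratedFDeriv ℝ l (reflectTranslate y Ψ) x‖ = ‖iteratedFDeriv ℝ l Ψ (y - x)‖ := by
  rw [iteratedFDeriv_reflectTranslate, norm_smul]
  simp

/-- The convolution of two complex valued Schwartz functions. -/
abbrev SchwartzMap.conv (K Ψ : SchwartzMap (Rn n) ℂ) : SchwartzMap (Rn n) ℂ :=
  SchwartzMap.convolution (ContinuousLinearMap.mul ℂ ℂ) K Ψ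

lemma SchwartzMap.conv_apply (K Ψ : SchwartzMap (Rn n) ℂ) (u : Rn n) :
    K.conv Ψ u = ∫ z, K z * Ψ (u - z) := by
  rw [SchwartzMap.convolution_apply]
  rfl

open LineDeriv in
lemma SchwartzMap.lineDerivOp_conv (K Ψ : SchwartzMap (Rn n) ℂ) (v : Rn n) :
    ∂_{v} (K.conv Ψ) = K.conv (∂_{v} Ψ) := by
  have hg : (inner ℝ · v : Rn n → ℝ).HasTemperateGrowth := by fun_prop
  refine (FourierTransform.fourierCLE ℂ (SchwartzMap (Rn n) ℂ)).injective ?_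
  simp only [FourierTransform.fourierCLE_apply]
  rw [SchwartzMap.fourier_convolution, SchwartzMap.fourier_lineDerivOp_eq,
    SchwartzMap.fourier_lineDerivOp_eq, SchwartzMap.fourier_convolution]
  ext x
  simp [SchwartzMap.smulLeftCLM_apply_apply hg]
  ring

open LineDeriv in
lemma SchwartzMap.iteratedLineDerivOp_conv (K Ψ : SchwartzMap (Rn n) ℂ) {l : ℕ}
    (m : Fin l → Rn n) : ∂^{m} (K.conv Ψ) = K.conv (∂^{m} Ψ) := by
  induction l with
  | zero => simp
  | succ l ih => rw [iteratedLineDerivOp_succ_left, ih, lineDerivOp_conv,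
        ← iteratedLineDerivOp_succ_left]

lemma seminorm_reflectTranslate_le (y : Rn n) (k l : ℕ) (Ψ : SchwartzMap (Rn n) ℂ) :
    SchwartzMap.seminorm ℂ k l (reflectTranslate y Ψ) ≤ (1 + ‖y‖) ^ k *
      (2 ^ k * (Finset.Iic (k, l)).sup (schwartzSeminormFamily ℂ (Rn n) ℂ) Ψ) := by
  refine SchwartzMap.seminorm_le_bound _ _ _ _ (by positivity) fun x => ?_
  rw [norm_iteratedFDeriv_reflectTranslate]
  have h := SchwartzMap.one_add_le_sup_seminorm_apply (𝕜 := ℂ) (m := (k, l)) le_rfl le_rfl Ψ (y - x)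
  have hx : ‖x‖ ≤ (1 + ‖y‖) * (1 + ‖y - x‖) := by
    have h1 : ‖x‖ ≤ ‖y‖ + ‖y - x‖ := by
      simpa using norm_sub_le y (y - x)
    nlinarith [norm_nonneg y, norm_nonneg (y - x), mul_nonneg (norm_nonneg y) (norm_nonneg (y - x))]
  calc ‖x‖ ^ k * ‖iteratedFDeriv ℝ l Ψ (y - x)‖
      ≤ ((1 + ‖y‖) * (1 + ‖y - x‖)) ^ k * ‖iteratedFDeriv ℝ l Ψ (y - x)‖ := by gcongr
    _ = (1 + ‖y‖) ^ k * ((1 + ‖y - x‖) ^ k * ‖iteratedFDeriv ℝ l Ψ (y - x)‖) := by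
      rw [mul_pow, mul_assoc]
    _ ≤ _ := mul_le_mul_of_nonneg_left h (by positivity)

lemma seminorm_reflectTranslate_sub_le (y y₀ : Rn n) (k l : ℕ) (Ψ : SchwartzMap (Rn n) ℂ)
    (hy : ‖y - y₀‖ ≤ 1) :
    SchwartzMap.seminorm ℂ k l (reflectTranslate y Ψ - reflectTranslate y₀ Ψ) ≤
      (2 + ‖y₀‖) ^ k * (2 ^ k * (Finset.Iic (k, l + 1)).sup (schwartzSeminormFamily ℂ (Rn n) ℂ) Ψ) *
        ‖y - y₀‖ := by
  refine SchwartzMap.seminorm_le_bound _ _ _ _ (by positivity) fun x => ?_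
  have e : iteratedFDeriv ℝ l
      (reflectTranslate y Ψ - reflectTranslate y₀ Ψ : SchwartzMap (Rn n) ℂ) x
      = (-1 : ℝ) ^ l • (iteratedFDeriv ℝ l Ψ (y - x) - iteratedFDeriv ℝ l Ψ (y₀ - x)) := by
    rw [smul_sub, ← iteratedFDeriv_reflectTranslate, ← iteratedFDeriv_reflectTranslate]
    exact iteratedFDeriv_sub_apply ((reflectTranslate y Ψ).contDiffAt l)
      ((reflectTranslate y₀ Ψ).contDiffAt l)
  have hd (u : Rn n) : HasFDerivAt (fun u => iteratedFDeriv ℝ l Ψ (u - x))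
      (fderiv ℝ (iteratedFDeriv ℝ l Ψ) (u - x)) u :=
    ((Ψ.smooth ⊤).differentiable_iteratedFDeriv (m := l)
      (by exact_mod_cast WithTop.coe_lt_top l) (u - x)).hasFDerivAt.comp u (hasFDerivAt_sub_const x)
  set M := (2 + ‖y₀‖) ^ k *
    (2 ^ k * (Finset.Iic (k, l + 1)).sup (schwartzSeminormFamily ℂ (Rn n) ℂ) Ψ)
  have hM : 0 ≤ M := by positivity
  have hb : ∀ u ∈ Metric.closedBall y₀ 1,
      ‖x‖ ^ k * ‖fderiv ℝ (iteratedFDeriv ℝ l Ψ) (u - x)‖ ≤ M := by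
    intro u hu
    rw [mem_closedBall_iff_norm] at hu
    have hu' : ‖u‖ ≤ 1 + ‖y₀‖ := by
      have := norm_add_le (u - y₀) y₀
      rw [sub_add_cancel] at this
      linarith
    rw [norm_fderiv_iteratedFDeriv, ← norm_iteratedFDeriv_reflectTranslate]
    refine ((SchwartzMap.le_seminorm ℂ k (l + 1) _ x).trans
      (seminorm_reflectTranslate_le u k (l + 1) Ψ)).trans ?_
    refine mul_le_mul_of_nonneg_right (pow_le_pow_left₀ (by positivity) ?_ k) (by positivity)
    linarith
  rw [e, norm_smul, norm_pow, norm_neg, norm_one, one_pow, one_mul]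
  rcases (pow_nonneg (norm_nonneg x) k).eq_or_lt with hx | hx
  · rw [← hx, zero_mul]
    positivity
  have hmv := (convex_closedBall y₀ 1).norm_image_sub_le_of_norm_hasFDerivWithin_le
    (C := M / ‖x‖ ^ k) (fun u _ => (hd u).hasFDerivWithinAt)
    (fun u hu => (le_div_iff₀' hx).2 (hb u hu)) (Metric.mem_closedBall_self zero_le_one)
    (mem_closedBall_iff_norm.2 hy)
  rwa [div_mul_eq_mul_div, le_div_iff₀' hx] at hmv

lemma continuous_reflectTranslate (Ψ : SchwartzMap (Rn n) ℂ) :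
    Continuous fun y => reflectTranslate y Ψ := by
  rw [continuous_iff_continuousAt]
  intro y₀
  rw [ContinuousAt, (schwartz_withSeminorms ℂ (Rn n) ℂ).tendsto_nhds]
  rintro ⟨k, l⟩ ε hε
  set M := (2 + ‖y₀‖) ^ k *
    (2 ^ k * (Finset.Iic (k, l + 1)).sup (schwartzSeminormFamily ℂ (Rn n) ℂ) Ψ)
  have hlim : Filter.Tendsto (fun y : Rn n => M * ‖y - y₀‖) (nhds y₀) (nhds 0) := by
    have : Continuous fun y : Rn n => M * ‖y - y₀‖ := by fun_prop
    simpa using this.tendsto y₀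
  filter_upwards [hlim.eventually_lt_const hε, Metric.closedBall_mem_nhds y₀ one_pos] with y h1 h2
  exact (seminorm_reflectTranslate_sub_le y y₀ k l Ψ (mem_closedBall_iff_norm.1 h2)).trans_lt h1

/-- The set of weighted directional derivatives `‖x‖ ^ i.1 * ∂_{m} φ(x)`, with `m` a family of
`i.2` vectors of the unit ball, that compute the Schwartz seminorms of index `i ∈ s`. -/
def WeightedDerivIndex (n : ℕ) (s : Finset (ℕ × ℕ)) : Type :=
  (i : s) × Rn n × (Fin i.1.2 → Metric.closedBall (0 : Rn n) 1)

instance (s : Finset (ℕ × ℕ)) : TopologicalSpace (WeightedDerivIndex n s) := ⊥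

instance (s : Finset (ℕ × ℕ)) : DiscreteTopology (WeightedDerivIndex n s) := ⟨rfl⟩

lemma norm_weightedDeriv_le {s : Finset (ℕ × ℕ)} (φ : SchwartzMap (Rn n) ℂ)
    (p : WeightedDerivIndex n s) :
    ‖((‖p.2.1‖ ^ p.1.1.1 : ℝ) : ℂ) * iteratedFDeriv ℝ p.1.1.2 φ p.2.1 (fun j => p.2.2 j)‖ ≤
      s.sup (schwartzSeminormFamily ℂ (Rn n) ℂ) φ := by
  obtain ⟨i, x, m⟩ := p
  have h1 : ‖iteratedFDeriv ℝ i.1.2 φ x (fun j => (m j : Rn n))‖ ≤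
      ‖iteratedFDeriv ℝ i.1.2 φ x‖ := by
    refine ((iteratedFDeriv ℝ i.1.2 φ x).le_opNorm _).trans (mul_le_of_le_one_right
      (norm_nonneg _) (Finset.prod_le_one (fun _ _ => norm_nonneg _) fun j _ => ?_))
    exact mem_closedBall_zero_iff.1 (m j).2
  rw [norm_mul, Complex.norm_real, norm_pow, norm_norm]
  calc _ ≤ ‖x‖ ^ i.1.1 * ‖iteratedFDeriv ℝ i.1.2 φ x‖ := by gcongr
    _ ≤ SchwartzMap.seminorm ℂ i.1.1 i.1.2 φ := SchwartzMap.le_seminorm ℂ _ _ φ x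
    _ ≤ _ := Seminorm.le_finset_sup_apply (p := schwartzSeminormFamily ℂ (Rn n) ℂ) i.2

/-- The weighted directional derivatives of a Schwartz function, as a bounded function. -/
def weightedDerivs (s : Finset (ℕ × ℕ)) :
    SchwartzMap (Rn n) ℂ →ₗ[ℂ] BoundedContinuousFunction (WeightedDerivIndex n s) ℂ where
  toFun φ := BoundedContinuousFunction.ofNormedAddCommGroupDiscrete _ _ (norm_weightedDeriv_le φ)
  map_add' φ χ := by
    ext p
    change _ * iteratedFDeriv ℝ p.1.1.2 (⇑φ + ⇑χ) p.2.1 _ = _ * _ + _ * _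
    rw [iteratedFDeriv_add_apply (φ.contDiffAt p.1.1.2) (χ.contDiffAt p.1.1.2), ← mul_add]
    rfl
  map_smul' c φ := by
    ext p
    change _ * iteratedFDeriv ℝ p.1.1.2 (c • ⇑φ) p.2.1 _ = c * (_ * _)
    rw [iteratedFDeriv_const_smul_apply (φ.contDiffAt p.1.1.2), mul_left_comm]
    rfl

lemma weightedDerivs_apply {s : Finset (ℕ × ℕ)} (φ : SchwartzMap (Rn n) ℂ)
    (p : WeightedDerivIndex n s) : weightedDerivs s φ p =
      ((‖p.2.1‖ ^ p.1.1.1 : ℝ) : ℂ) * iteratedFDeriv ℝ p.1.1.2 φ p.2.1 (fun j => p.2.2 j) := rfl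

lemma norm_weightedDerivs (s : Finset (ℕ × ℕ)) (φ : SchwartzMap (Rn n) ℂ) :
    ‖weightedDerivs s φ‖ = s.sup (schwartzSeminormFamily ℂ (Rn n) ℂ) φ := by
  refine le_antisymm ((BoundedContinuousFunction.norm_le (apply_nonneg _ _)).2
    (norm_weightedDeriv_le φ)) (Seminorm.finset_sup_apply_le (norm_nonneg _) fun i hi => ?_)
  refine SchwartzMap.seminorm_le_bound _ _ _ _ (norm_nonneg _) fun x => ?_
  have hsmul : ‖‖x‖ ^ i.1 • iteratedFDeriv ℝ i.2 φ x‖ ≤ ‖weightedDerivs s φ‖ := by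
    refine ContinuousMultilinearMap.opNorm_le_bound (norm_nonneg _) fun m => ?_
    let u (j : Fin i.2) : Metric.closedBall (0 : Rn n) 1 :=
      ⟨‖m j‖⁻¹ • m j, by
        rw [mem_closedBall_zero_iff, norm_smul, norm_inv, norm_norm]
        exact inv_mul_le_one⟩
    have hm : m = fun j => ‖m j‖ • (u j : Rn n) := by
      ext1 j
      rcases eq_or_ne (m j) 0 with h | h
      · simp [h]
      · simp [u, smul_smul, h]
    let p : WeightedDerivIndex n s := ⟨⟨i, hi⟩, x, u⟩
    have hu := (weightedDerivs s φ).norm_coe_le_norm p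
    rw [weightedDerivs_apply φ p, norm_mul, Complex.norm_real] at hu
    conv_lhs => rw [hm]
    rw [ContinuousMultilinearMap.map_smul_univ, norm_smul, norm_prod,
      _root_.smul_apply, norm_smul, mul_comm]
    simp only [norm_norm]
    exact mul_le_mul_of_nonneg_right hu (by positivity)
  rwa [norm_smul, norm_pow, norm_norm] at hsmul

lemma exists_eq_comp_of_norm_le {V B : Type*} [AddCommGroup V] [Module ℂ V]
    [NormedAddCommGroup B] [NormedSpace ℂ B] (J : V →ₗ[ℂ] B) (f : V →ₗ[ℂ] ℂ) (C : ℝ)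
    (h : ∀ v, ‖f v‖ ≤ C * ‖J v‖) : ∃ F : B →L[ℂ] ℂ, ∀ v, f v = F (J v) := by
  have hker : LinearMap.ker J ≤ LinearMap.ker f := by
    intro v hv
    have h' := h v
    rw [LinearMap.mem_ker.1 hv, norm_zero, mul_zero] at h'
    exact norm_le_zero_iff.1 h'
  let g : LinearMap.range J →ₗ[ℂ] ℂ :=
    ((LinearMap.ker J).liftQ f hker) ∘ₗ J.quotKerEquivRange.symm.toLinearMap
  have hg (v : V) : g ⟨J v, v, rfl⟩ = f v := by
    have : J.quotKerEquivRange.symm ⟨J v, v, rfl⟩ = Submodule.Quotient.mk v := by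
      rw [LinearEquiv.symm_apply_eq]
      rfl
    simp only [g, LinearMap.comp_apply, LinearEquiv.coe_coe, this]
    rfl
  let G : StrongDual ℂ (LinearMap.range J) :=
    g.mkContinuous C (by
      rintro ⟨_, v, rfl⟩
      rw [hg]
      exact h v)
  obtain ⟨F, hF, -⟩ := exists_extension_norm_eq _ G
  exact ⟨F, fun v => (hg v).symm.trans (hF ⟨J v, v, rfl⟩).symm⟩

lemma TemperedDist.exists_norm_le (f : TemperedDist n) : ∃ (s : Finset (ℕ × ℕ)) (C : ℝ), 0 ≤ C ∧
    ∀ φ, ‖f φ‖ ≤ C * s.sup (schwartzSeminormFamily ℂ (Rn n) ℂ) φ := by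
  obtain ⟨s, C, -, hC⟩ := Seminorm.bound_of_continuous (schwartz_withSeminorms ℂ (Rn n) ℂ)
    ((normSeminorm ℂ ℂ).comp f.toLinearMap) (by
      change Continuous fun φ => ‖f φ‖
      fun_prop)
  exact ⟨s, C, C.2, hC⟩

/-- A tempered distribution factors through finitely many weighted derivatives. -/
lemma TemperedDist.exists_eq_comp_weightedDerivs (f : TemperedDist n) :
    ∃ (s : Finset (ℕ × ℕ)) (F : BoundedContinuousFunction (WeightedDerivIndex n s) ℂ →L[ℂ] ℂ),
      ∀ φ, f φ = F (weightedDerivs s φ) := by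
  obtain ⟨s, C, -, hC⟩ := f.exists_norm_le
  obtain ⟨F, hF⟩ := exists_eq_comp_of_norm_le (weightedDerivs s) f.toLinearMap C fun φ => by
    rw [norm_weightedDerivs]
    exact hC φ
  exact ⟨s, F, hF⟩

lemma exists_seminorm_reflectTranslate_le (s : Finset (ℕ × ℕ)) :
    ∃ (k : ℕ) (s' : Finset (ℕ × ℕ)), ∀ (Ψ : SchwartzMap (Rn n) ℂ) (y : Rn n),
      s.sup (schwartzSeminormFamily ℂ (Rn n) ℂ) (reflectTranslate y Ψ) ≤
        (1 + ‖y‖) ^ k * (2 ^ k * s'.sup (schwartzSeminormFamily ℂ (Rn n) ℂ) Ψ) := by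
  refine ⟨s.sup Prod.fst, s.biUnion Finset.Iic, fun Ψ y => ?_⟩
  refine Seminorm.finset_sup_apply_le (by positivity) fun i hi => ?_
  refine (seminorm_reflectTranslate_le y i.1 i.2 Ψ).trans ?_
  have h1 : i.1 ≤ s.sup Prod.fst := Finset.le_sup hi
  have h2 : (Finset.Iic (i.1, i.2)).sup (schwartzSeminormFamily ℂ (Rn n) ℂ) ≤
      (s.biUnion Finset.Iic).sup (schwartzSeminormFamily ℂ (Rn n) ℂ) :=
    Finset.sup_mono (Finset.subset_biUnion_of_mem Finset.Iic hi)
  have h3 := h2 Ψ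
  have h4 : 1 ≤ 1 + ‖y‖ := le_add_of_nonneg_right (norm_nonneg y)
  gcongr
  exact one_le_two

lemma continuous_weightedDerivs (s : Finset (ℕ × ℕ)) : Continuous (weightedDerivs (n := n) s) := by
  refine WithSeminorms.continuous_of_isBounded (schwartz_withSeminorms ℂ (Rn n) ℂ)
    (norm_withSeminorms ℂ (BoundedContinuousFunction (WeightedDerivIndex n s) ℂ)) _
    fun i => ⟨s, 1, ?_⟩
  intro φ
  rw [one_smul]
  exact (norm_weightedDerivs s φ).le

lemma SchwartzMap.integrable_one_add_norm_pow_mul (K : SchwartzMap (Rn n) ℂ) (k : ℕ) :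
    Integrable fun z => (1 + ‖z‖) ^ k * ‖K z‖ := by
  have e : (fun z => (1 + ‖z‖) ^ k * ‖K z‖) = fun z => ∑ i ∈ Finset.range (k + 1),
      (k.choose i : ℝ) * (‖z‖ ^ i * ‖K z‖) := by
    ext z
    rw [add_comm, add_pow, Finset.sum_mul]
    exact Finset.sum_congr rfl fun i _ => by ring
  rw [e]
  exact integrable_finsetSum _ fun i _ => (K.integrable_pow_mul volume i).const_mul _

lemma integrable_smul_weightedDerivs (K Ψ : SchwartzMap (Rn n) ℂ) (y : Rn n)
    (s : Finset (ℕ × ℕ)) :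
    Integrable fun z => K z • weightedDerivs s (reflectTranslate (y - z) Ψ) := by
  obtain ⟨k, s', hk⟩ := exists_seminorm_reflectTranslate_le (n := n) s
  set M := 2 ^ k * s'.sup (schwartzSeminormFamily ℂ (Rn n) ℂ) Ψ
  have hM : 0 ≤ M := by positivity
  refine ((K.integrable_one_add_norm_pow_mul k).mul_const ((1 + ‖y‖) ^ k * M)).mono' ?_ ?_
  · have h := (continuous_weightedDerivs s).comp (continuous_reflectTranslate Ψ)
    have h' : Continuous fun z => weightedDerivs s (reflectTranslate (y - z) Ψ) :=
      h.comp (continuous_const.sub continuous_id)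
    exact (K.continuous.smul h').aestronglyMeasurable
  · refine .of_forall fun z => ?_
    rw [norm_smul, norm_weightedDerivs]
    have h1 : 1 + ‖y - z‖ ≤ (1 + ‖z‖) * (1 + ‖y‖) := by
      nlinarith [norm_sub_le y z, mul_nonneg (norm_nonneg y) (norm_nonneg z)]
    calc ‖K z‖ * _ ≤ ‖K z‖ * ((1 + ‖y - z‖) ^ k * M) := by gcongr; exact hk Ψ (y - z)
      _ ≤ ‖K z‖ * (((1 + ‖z‖) * (1 + ‖y‖)) ^ k * M) := by gcongr
      _ = _ := by rw [mul_pow]; ring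

lemma integral_smul_weightedDerivs (K Ψ : SchwartzMap (Rn n) ℂ) (y : Rn n)
    (s : Finset (ℕ × ℕ)) : ∫ z, K z • weightedDerivs s (reflectTranslate (y - z) Ψ) =
      weightedDerivs s (reflectTranslate y (K.conv Ψ)) := by
  ext p
  have h := (BoundedContinuousFunction.evalCLM ℂ p).integral_comp_comm
    (integrable_smul_weightedDerivs K Ψ y s)
  rw [BoundedContinuousFunction.evalCLM_apply] at h
  rw [← h]
  simp only [BoundedContinuousFunction.evalCLM_apply, BoundedContinuousFunction.coe_smul,
    weightedDerivs_apply, iteratedFDeriv_reflectTranslate, _root_.smul_apply,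
    ← SchwartzMap.iteratedLineDerivOp_eq_iteratedFDeriv, SchwartzMap.iteratedLineDerivOp_conv,
    SchwartzMap.conv_apply]
  rw [← integral_smul, ← integral_const_mul]
  refine integral_congr_ae (.of_forall fun z => ?_)
  simp only [smul_eq_mul, Complex.real_smul, sub_right_comm y z]
  ring

/-- The convolution with a distribution is compatible with the convolution of Schwartz functions. -/
lemma distConv_conv (K Ψ : SchwartzMap (Rn n) ℂ) (f : TemperedDist n) (y : Rn n) :
    distConv (K.conv Ψ) f y = ∫ z, K z * distConv Ψ f (y - z) := by
  obtain ⟨s, F, hF⟩ := f.exists_eq_comp_weightedDerivs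
  simp only [distConv, hF]
  rw [← integral_smul_weightedDerivs,
    ← F.integral_comp_comm (integrable_smul_weightedDerivs K Ψ y s)]
  simp

/-- The dilation `φ ↦ φ(2^{-m} ·)` of Schwartz functions. -/
def SchwartzMap.dyadicDilate (m : ℕ) : SchwartzMap (Rn n) ℂ →L[ℂ] SchwartzMap (Rn n) ℂ :=
  SchwartzMap.compCLMOfContinuousLinearEquiv ℂ
    (ContinuousLinearEquiv.smulLeft (Units.mk0 ((2 : ℝ) ^ m)⁻¹ (by positivity)))

@[simp] lemma SchwartzMap.dyadicDilate_apply (m : ℕ) (φ : SchwartzMap (Rn n) ℂ) (x : Rn n) :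
    SchwartzMap.dyadicDilate m φ x = φ (((2 : ℝ) ^ m)⁻¹ • x) := rfl

lemma SchwartzMap.seminorm_dyadicDilate_le (m k l : ℕ) (φ : SchwartzMap (Rn n) ℂ) :
    SchwartzMap.seminorm ℂ k l (dyadicDilate m φ) ≤ (2 ^ m) ^ k * SchwartzMap.seminorm ℂ k l φ := by
  refine SchwartzMap.seminorm_le_bound _ _ _ _ (by positivity) fun x => ?_
  have e : iteratedFDeriv ℝ l (dyadicDilate m φ) x =
      (((2 : ℝ) ^ m)⁻¹) ^ l • iteratedFDeriv ℝ l φ (((2 : ℝ) ^ m)⁻¹ • x) :=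
    congrFun (iteratedFDeriv_comp_const_smul (((2 : ℝ) ^ m)⁻¹) (φ.smooth l)) x
  have hx : ‖x‖ = 2 ^ m * ‖((2 : ℝ) ^ m)⁻¹ • x‖ := by
    rw [norm_smul, norm_inv, norm_pow, Real.norm_ofNat, mul_inv_cancel_left₀ (by positivity)]
  have h1 : ‖(((2 : ℝ) ^ m)⁻¹) ^ l‖ ≤ 1 := by
    rw [norm_pow, norm_inv, norm_pow, Real.norm_ofNat]
    exact pow_le_one₀ (by positivity) (inv_le_one_of_one_le₀ (one_le_pow₀ one_le_two))
  rw [e, norm_smul, hx, mul_pow, mul_assoc]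
  gcongr
  refine le_trans ?_ (SchwartzMap.le_seminorm ℂ k l φ (((2 : ℝ) ^ m)⁻¹ • x))
  gcongr
  exact mul_le_of_le_one_left (norm_nonneg _) h1

lemma SchwartzMap.exists_finset_sup_dyadicDilate_le (s : Finset (ℕ × ℕ)) : ∃ k : ℕ,
    ∀ (m : ℕ) (φ : SchwartzMap (Rn n) ℂ),
      s.sup (schwartzSeminormFamily ℂ (Rn n) ℂ) (dyadicDilate m φ) ≤
        (2 ^ m) ^ k * s.sup (schwartzSeminormFamily ℂ (Rn n) ℂ) φ := by
  refine ⟨s.sup Prod.fst, fun m φ => Seminorm.finset_sup_apply_le (by positivity) fun i hi => ?_⟩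
  refine (seminorm_dyadicDilate_le m i.1 i.2 φ).trans ?_
  have h1 : i.1 ≤ s.sup Prod.fst := Finset.le_sup hi
  have h2 : SchwartzMap.seminorm ℂ i.1 i.2 φ ≤ s.sup (schwartzSeminormFamily ℂ (Rn n) ℂ) φ :=
    Seminorm.le_finset_sup_apply (p := schwartzSeminormFamily ℂ (Rn n) ℂ) hi
  gcongr
  exact one_le_pow₀ one_le_two

lemma SchwartzMap.exists_finset_sup_fourier_le (s : Finset (ℕ × ℕ)) :
    ∃ (s' : Finset (ℕ × ℕ)) (C : ℝ), 0 ≤ C ∧ ∀ φ : SchwartzMap (Rn n) ℂ,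
      s.sup (schwartzSeminormFamily ℂ (Rn n) ℂ) (fourierTransformCLM ℂ φ) ≤
        C * s'.sup (schwartzSeminormFamily ℂ (Rn n) ℂ) φ := by
  have hcont : Continuous fun φ => s.sup (schwartzSeminormFamily ℂ (Rn n) ℂ) φ := by
    simpa only [norm_weightedDerivs] using (continuous_weightedDerivs (n := n) s).norm
  obtain ⟨s', C, -, hC⟩ := Seminorm.bound_of_continuous (schwartz_withSeminorms ℂ (Rn n) ℂ)
    ((s.sup (schwartzSeminormFamily ℂ (Rn n) ℂ)).comp
      (fourierTransformCLM ℂ (V := Rn n) (E := ℂ)).toLinearMap)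
    (hcont.comp (fourierTransformCLM ℂ).continuous)
  exact ⟨s', C, C.2, hC⟩

lemma continuous_distConv (Ψ : SchwartzMap (Rn n) ℂ) (f : TemperedDist n) :
    Continuous (distConv Ψ f) := f.continuous.comp (continuous_reflectTranslate Ψ)

/-- Polynomial growth, in the space variable and in the dyadic scale, of the convolutions of a
tempered distribution with dilated kernels. -/
lemma exists_norm_distConv_dyadicDilate_le (f : TemperedDist n) (V : ℕ → SchwartzMap (Rn n) ℂ)
    (hV : ∀ m, V (m + 1) = V 1) : ∃ (A₀ : ℕ) (C : ℝ), 0 ≤ C ∧ ∀ m z,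
      ‖distConv (SchwartzMap.fourierTransformCLM ℂ (SchwartzMap.dyadicDilate m (V m))) f z‖ ≤
        C * (2 ^ m * (1 + ‖z‖)) ^ A₀ := by
  obtain ⟨s, C₁, hC₁, h₁⟩ := f.exists_norm_le
  obtain ⟨k₁, s₁, h₂⟩ := exists_seminorm_reflectTranslate_le (n := n) s
  obtain ⟨s₂, C₂, hC₂, h₃⟩ := SchwartzMap.exists_finset_sup_fourier_le (n := n) s₁
  obtain ⟨k₂, h₄⟩ := SchwartzMap.exists_finset_sup_dyadicDilate_le (n := n) s₂
  set q := s₂.sup (schwartzSeminormFamily ℂ (Rn n) ℂ)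
  have hq (m : ℕ) : q (V m) ≤ q (V 0) + q (V 1) := by
    cases m with
    | zero => exact le_add_of_nonneg_right (apply_nonneg _ _)
    | succ m => rw [hV]; exact le_add_of_nonneg_left (apply_nonneg _ _)
  set D := q (V 0) + q (V 1)
  have hD : 0 ≤ D := by positivity
  refine ⟨k₁ + k₂, C₁ * (2 ^ k₁ * (C₂ * D)), by positivity, fun m z => ?_⟩
  have hz : 1 ≤ 1 + ‖z‖ := le_add_of_nonneg_right (norm_nonneg z)
  have h2 : (1 : ℝ) ≤ 2 ^ m := one_le_pow₀ one_le_two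
  calc _ ≤ C₁ * ((1 + ‖z‖) ^ k₁ * (2 ^ k₁ * (C₂ * ((2 ^ m) ^ k₂ * D)))) := by
        refine (h₁ _).trans ?_
        gcongr
        refine (h₂ _ _).trans ?_
        gcongr
        refine (h₃ _).trans ?_
        gcongr
        refine (h₄ _ _).trans ?_
        gcongr
        exact hq m
    _ = C₁ * (2 ^ k₁ * (C₂ * D)) * (1 * (1 + ‖z‖)) ^ k₁ * (2 ^ m * 1) ^ k₂ := by ring
    _ ≤ C₁ * (2 ^ k₁ * (C₂ * D)) * (2 ^ m * (1 + ‖z‖)) ^ k₁ * (2 ^ m * (1 + ‖z‖)) ^ k₂ := by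
        gcongr
    _ = _ := by ring

lemma dampedSup_ne_top_of_growth {G : ℕ → Rn n → ℝ≥0∞} {A₀ : ℕ} {C : ℝ}
    (hG : ∀ m z, G m z ≤ ENNReal.ofReal (C * (2 ^ m * (1 + ‖z‖)) ^ A₀)) {A : ℕ} (hA : A₀ ≤ A)
    (hC : 0 ≤ C) (ν : ℕ) (x : Rn n) : dampedSup A G ν x ≠ ∞ := by
  refine ne_top_of_le_ne_top (ENNReal.ofReal_ne_top (r := C * (2 ^ ν * (1 + ‖x‖)) ^ A₀))
    (iSup₂_le fun k z => ?_)
  have h1 : 2 ^ (ν + k) * (1 + ‖z‖) ≤ 2 ^ ν * (1 + ‖x‖) * (2 ^ k * (1 + 2 ^ ν * ‖x - z‖)) := by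
    have h2 : ‖z‖ ≤ ‖x‖ + ‖x - z‖ := by
      simpa using norm_sub_le x (x - z)
    have h3 : ‖x - z‖ ≤ 2 ^ ν * ‖x - z‖ :=
      le_mul_of_one_le_left (norm_nonneg _) (one_le_pow₀ one_le_two)
    have h4 : 1 + ‖z‖ ≤ (1 + ‖x‖) * (1 + 2 ^ ν * ‖x - z‖) := by
      nlinarith [mul_nonneg (norm_nonneg x) ((norm_nonneg _).trans h3)]
    calc _ ≤ 2 ^ (ν + k) * ((1 + ‖x‖) * (1 + 2 ^ ν * ‖x - z‖)) := by gcongr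
      _ = _ := by ring
  rw [damped, mul_comm, ← div_eq_mul_inv]
  refine ENNReal.div_le_of_le_mul ((hG _ _).trans ?_)
  calc ENNReal.ofReal (C * (2 ^ (ν + k) * (1 + ‖z‖)) ^ A₀)
      ≤ ENNReal.ofReal (C * (2 ^ ν * (1 + ‖x‖) * (2 ^ k * (1 + 2 ^ ν * ‖x - z‖))) ^ A₀) := by
        gcongr
    _ = ENNReal.ofReal (C * (2 ^ ν * (1 + ‖x‖)) ^ A₀) * dyadicWeight ν k (x - z) ^ A₀ := by
        rw [mul_pow, ← mul_assoc, ENNReal.ofReal_mul (by positivity),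
          ENNReal.ofReal_pow (by positivity) A₀, dyadicWeight]
    _ ≤ _ := by
        gcongr
        exact one_le_dyadicWeight ν k _

lemma Function.HasTemperateGrowth.comp_two_pow_inv_smul {g : Rn n → ℂ}
    (hg : g.HasTemperateGrowth) (j : ℕ) :
    Function.HasTemperateGrowth fun x => g (((2 : ℝ) ^ j)⁻¹ • x) :=
  hg.comp ((((2 : ℝ) ^ j)⁻¹ • ContinuousLinearMap.id ℝ (Rn n)).hasTemperateGrowth)

lemma SchwartzMap.exists_norm_iteratedFDeriv_const_sub_le (b : ℂ) (φ : SchwartzMap (Rn n) ℂ)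
    (l : ℕ) : ∃ B, ∀ x, ‖iteratedFDeriv ℝ l (fun x => b - φ x) x‖ ≤ B := by
  refine ⟨‖b‖ + SchwartzMap.seminorm ℂ 0 l φ, fun x => ?_⟩
  rw [show iteratedFDeriv ℝ l (fun x => b - φ x) x = _ from
    iteratedFDeriv_sub_apply (f := fun _ : Rn n => b) contDiffAt_const (φ.contDiffAt l)]
  refine (norm_sub_le _ _).trans
    (add_le_add ?_ (SchwartzMap.norm_iteratedFDeriv_le_seminorm ℂ φ l x))
  cases l with
  | zero => rw [norm_iteratedFDeriv_zero]
  | succ l => simp [iteratedFDeriv_succ_const]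

/-- Multiplying a fixed Schwartz function by the dilations `g(2^{-j} ·)` of a function that vanishes
near the origin produces Schwartz functions that decay faster than any power of `2^{-j}`. -/
lemma SchwartzMap.exists_seminorm_smulLeftCLM_le {g : Rn n → ℂ} (hg : g.HasTemperateGrowth)
    (hb : ∀ l, ∃ B, ∀ x, ‖iteratedFDeriv ℝ l g x‖ ≤ B) {c : ℝ} (hc : 0 < c)
    (h0 : ∀ x, ‖x‖ < c → g x = 0) (u : SchwartzMap (Rn n) ℂ) (L k l : ℕ) :
    ∃ C, 0 ≤ C ∧ ∀ j : ℕ, SchwartzMap.seminorm ℂ k l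
      (smulLeftCLM ℂ (fun x => g (((2 : ℝ) ^ j)⁻¹ • x)) u) ≤ C * ((2 ^ j) ^ L)⁻¹ := by
  choose B hB using hb
  have hB0 (i : ℕ) : 0 ≤ B i := (norm_nonneg _).trans (hB i 0)
  have hterm (i : ℕ) : 0 ≤ (l.choose i : ℝ) * B i *
      ((c ^ L)⁻¹ * SchwartzMap.seminorm ℂ (k + L) (l - i) u) := by
    have := hB0 i
    positivity
  have hS := Finset.sum_nonneg fun i (_ : i ∈ Finset.range (l + 1)) => hterm i
  refine ⟨∑ i ∈ Finset.range (l + 1), (l.choose i : ℝ) * B i *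
    ((c ^ L)⁻¹ * SchwartzMap.seminorm ℂ (k + L) (l - i) u),
    hS, fun j => ?_⟩
  set d : ℝ := (2 ^ j)⁻¹
  have hd : 0 < d := by positivity
  have hd1 : d ≤ 1 := inv_le_one_of_one_le₀ (one_le_pow₀ one_le_two)
  have hgj : Function.HasTemperateGrowth fun x => g (d • x) := hg.comp_two_pow_inv_smul j
  rw [show (((2 : ℝ) ^ j) ^ L)⁻¹ = d ^ L from (inv_pow _ _).symm]
  refine SchwartzMap.seminorm_le_bound _ _ _ _ (mul_nonneg hS (by positivity)) fun x => ?_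
  rw [smulLeftCLM_apply hgj]
  rcases lt_or_ge ‖d • x‖ c with hx | hx
  · have hzero : (fun y => g (d • y) • u y) =ᶠ[nhds x] fun _ => 0 := by
      have hopen : IsOpen {y : Rn n | ‖d • y‖ < c} := by
        apply isOpen_lt <;> fun_prop
      filter_upwards [hopen.mem_nhds hx] with y hy
      rw [h0 _ hy, zero_smul]
    rw [(hzero.iteratedFDeriv ℝ l).eq_of_nhds, iteratedFDeriv_fun_zero, Pi.zero_apply,
      norm_zero, mul_zero]
    exact mul_nonneg hS (by positivity)
  have hdx (i : ℕ) : ‖iteratedFDeriv ℝ i (fun x => g (d • x)) x‖ ≤ B i := by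
    rw [iteratedFDeriv_comp_const_smul d (hg.1.of_le (by exact_mod_cast le_top)), norm_smul,
      norm_pow, Real.norm_of_nonneg hd.le]
    exact (mul_le_of_le_one_left (norm_nonneg _) (pow_le_one₀ hd.le hd1)).trans (hB i _)
  have hxL : 1 ≤ d ^ L * (c ^ L)⁻¹ * ‖x‖ ^ L := by
    rw [norm_smul, Real.norm_of_nonneg hd.le] at hx
    calc (1 : ℝ) = (c ^ L)⁻¹ * c ^ L := (inv_mul_cancel₀ (by positivity)).symm
      _ ≤ (c ^ L)⁻¹ * (d * ‖x‖) ^ L := by gcongr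
      _ = _ := by ring
  have hleib := norm_iteratedFDeriv_smul_le (𝕜 := ℝ)
      (hgj.1.of_le (m := l) (by exact_mod_cast le_top))
    (u.smooth l) x (n := l) le_rfl
  calc ‖x‖ ^ k * _ ≤ ‖x‖ ^ k * ∑ i ∈ Finset.range (l + 1), (l.choose i : ℝ) *
          ‖iteratedFDeriv ℝ i (fun x => g (d • x)) x‖ * ‖iteratedFDeriv ℝ (l - i) u x‖ := by
        gcongr
    _ ≤ ‖x‖ ^ k * ∑ i ∈ Finset.range (l + 1), (l.choose i : ℝ) * B i *
          (d ^ L * (c ^ L)⁻¹ * ‖x‖ ^ L * ‖iteratedFDeriv ℝ (l - i) u x‖) := by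
        gcongr with i
        · exact mul_nonneg (Nat.cast_nonneg _) (hB0 i)
        · exact hdx i
        · exact le_mul_of_one_le_left (norm_nonneg _) hxL
    _ = ∑ i ∈ Finset.range (l + 1), (l.choose i : ℝ) * B i * ((c ^ L)⁻¹ *
          (‖x‖ ^ (k + L) * ‖iteratedFDeriv ℝ (l - i) u x‖)) * d ^ L := by
        rw [Finset.mul_sum]
        exact Finset.sum_congr rfl fun i _ => by ring
    _ ≤ _ := by
        rw [Finset.sum_mul]
        gcongr with i
        · exact mul_nonneg (Nat.cast_nonneg _) (hB0 i)
        · exact SchwartzMap.le_seminorm ℂ (k + L) (l - i) u x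

lemma SchwartzMap.exists_finset_sup_smulLeftCLM_le {g : Rn n → ℂ} (hg : g.HasTemperateGrowth)
    (hb : ∀ l, ∃ B, ∀ x, ‖iteratedFDeriv ℝ l g x‖ ≤ B) {c : ℝ} (hc : 0 < c)
    (h0 : ∀ x, ‖x‖ < c → g x = 0) (u : SchwartzMap (Rn n) ℂ) (L : ℕ) (s : Finset (ℕ × ℕ)) :
    ∃ C, 0 ≤ C ∧ ∀ j : ℕ, s.sup (schwartzSeminormFamily ℂ (Rn n) ℂ)
      (smulLeftCLM ℂ (fun x => g (((2 : ℝ) ^ j)⁻¹ • x)) u) ≤ C * ((2 ^ j) ^ L)⁻¹ := by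
  choose C hC hC' using exists_seminorm_smulLeftCLM_le hg hb hc h0 u L
  refine ⟨∑ i ∈ s, C i.1 i.2, Finset.sum_nonneg fun i _ => hC _ _, fun j => ?_⟩
  have hnn : ∀ i ∈ s, 0 ≤ C i.1 i.2 := fun i _ => hC _ _
  refine Seminorm.finset_sup_apply_le (mul_nonneg (Finset.sum_nonneg hnn) (by positivity))
    fun i hi => (hC' i.1 i.2 j).trans ?_
  gcongr
  exact Finset.single_le_sum (f := fun i : ℕ × ℕ => C i.1 i.2) hnn hi

/-- Convergence to zero of Schwartz functions cut off away from larger and larger balls. -/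
lemma SchwartzMap.tendsto_smulLeftCLM_zero {g : Rn n → ℂ} (hg : g.HasTemperateGrowth)
    (hb : ∀ l, ∃ B, ∀ x, ‖iteratedFDeriv ℝ l g x‖ ≤ B) {c : ℝ} (hc : 0 < c)
    (h0 : ∀ x, ‖x‖ < c → g x = 0) (u : SchwartzMap (Rn n) ℂ) :
    Filter.Tendsto (fun j : ℕ => smulLeftCLM ℂ (fun x => g (((2 : ℝ) ^ j)⁻¹ • x)) u)
      Filter.atTop (nhds 0) := by
  rw [(schwartz_withSeminorms ℂ (Rn n) ℂ).tendsto_nhds]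
  rintro ⟨k, l⟩ ε hε
  obtain ⟨C, -, hC⟩ := exists_seminorm_smulLeftCLM_le hg hb hc h0 u 1 k l
  have hlim : Filter.Tendsto (fun j : ℕ => C * (((2 : ℝ) ^ j) ^ 1)⁻¹) Filter.atTop (nhds 0) := by
    have := (tendsto_pow_atTop_nhds_zero_of_lt_one (r := (2 : ℝ)⁻¹) (by norm_num)
      (by norm_num)).const_mul C
    simpa using this
  filter_upwards [hlim.eventually_lt_const hε] with j hj
  rw [sub_zero]
  exact (hC j).trans_lt hj

lemma SchwartzMap.exists_one_add_pow_mul_norm_fourier_le (A : ℕ) :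
    ∃ (s : Finset (ℕ × ℕ)) (C : ℝ), 0 ≤ C ∧ ∀ (φ : SchwartzMap (Rn n) ℂ) (x : Rn n),
      (1 + ‖x‖) ^ A * ‖fourierTransformCLM ℂ φ x‖ ≤
        C * s.sup (schwartzSeminormFamily ℂ (Rn n) ℂ) φ := by
  obtain ⟨s, C, hC, h⟩ := exists_finset_sup_fourier_le (n := n) (Finset.Iic (A, 0))
  refine ⟨s, 2 ^ A * C, by positivity, fun φ x => ?_⟩
  have h' := SchwartzMap.one_add_le_sup_seminorm_apply (𝕜 := ℂ) (m := (A, 0)) le_rfl le_rfl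
    (fourierTransformCLM ℂ φ) x
  rw [norm_iteratedFDeriv_zero] at h'
  rw [mul_assoc]
  exact h'.trans (mul_le_mul_of_nonneg_left (h φ) (by positivity))

lemma SchwartzMap.fourier_dyadicDilate_apply (m : ℕ) (φ : SchwartzMap (Rn n) ℂ) (x : Rn n) :
    fourierTransformCLM ℂ (dyadicDilate m φ) x =
      2 ^ (m * n) * fourierTransformCLM ℂ φ ((2 : ℝ) ^ m • x) := by
  simp only [fourierTransformCLM_apply, fourier_coe, Real.fourier_eq]
  have h := Measure.integral_comp_smul (volume : Measure (Rn n))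
    (fun u => Real.fourierChar (-inner ℝ u ((2 : ℝ) ^ m • x)) • φ u) ((2 : ℝ) ^ m)⁻¹
  have e (u : Rn n) : inner ℝ (((2 : ℝ) ^ m)⁻¹ • u) ((2 : ℝ) ^ m • x) = inner ℝ u x := by
    rw [inner_smul_left, inner_smul_right]
    simp
  simp only [e] at h
  simp only [dyadicDilate_apply]
  rw [h, finrank_euclideanSpace_fin, inv_pow, inv_inv, abs_of_pos (by positivity), ← pow_mul,
    Complex.real_smul]
  simp

lemma SchwartzMap.fourier_eq_conv_of_eq_mul {P κ ψ : SchwartzMap (Rn n) ℂ}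
    (h : ∀ x, P x = κ x * ψ x) :
    fourierTransformCLM ℂ P = (fourierTransformCLM ℂ κ).conv (fourierTransformCLM ℂ ψ) := by
  refine (FourierTransform.fourierCLE ℂ (SchwartzMap (Rn n) ℂ)).injective ?_
  have hinv (φ : SchwartzMap (Rn n) ℂ) (x : Rn n) : 𝓕 (𝓕 φ) x = φ (-x) := by
    have h2 : 𝓕⁻ (𝓕 φ) (-x) = φ (-x) := by simp
    rw [fourierInv_apply_eq] at h2
    simpa using h2
  simp only [FourierTransform.fourierCLE_apply, fourierTransformCLM_apply]
  rw [SchwartzMap.fourier_convolution]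
  ext x
  simp [hinv, h]

/-- Linear dependence of `distConv (𝓕 φ) f y` on `φ`. -/
def fourierDistConvCLM (f : TemperedDist n) (y : Rn n) : SchwartzMap (Rn n) ℂ →L[ℂ] ℂ :=
  f ∘L SchwartzMap.compCLMOfAntilipschitz (𝕜 := ℂ) (K := 1)
    (hasTemperateGrowth_reflectTranslate y)
    ((Isometry.of_dist_eq (fun z z' => dist_sub_left y z z')).antilipschitz) ∘L
    SchwartzMap.fourierTransformCLM ℂ

lemma fourierDistConvCLM_apply (f : TemperedDist n) (y : Rn n) (φ : SchwartzMap (Rn n) ℂ) :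
    fourierDistConvCLM f y φ = distConv (SchwartzMap.fourierTransformCLM ℂ φ) f y := rfl

lemma enorm_distConv_conv_le (K Ψ : SchwartzMap (Rn n) ℂ) (f : TemperedDist n) (y : Rn n) :
    ‖distConv (K.conv Ψ) f y‖ₑ ≤ ∫⁻ z, ‖K (y - z)‖ₑ * ‖distConv Ψ f z‖ₑ := by
  rw [distConv_conv]
  refine (enorm_integral_le_lintegral_enorm _).trans (le_of_eq ?_)
  rw [← lintegral_sub_left_eq_self _ y]
  simp [enorm_mul]

lemma enorm_fourier_dyadicDilate_le {H : SchwartzMap (Rn n) ℂ} {A j : ℕ} {D : ℝ} (hD : 0 ≤ D)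
    (h : ∀ x, (1 + ‖x‖) ^ A * ‖SchwartzMap.fourierTransformCLM ℂ H x‖ ≤ D * ((2 ^ j) ^ A)⁻¹)
    (ν : ℕ) (x : Rn n) :
    ‖SchwartzMap.fourierTransformCLM ℂ (SchwartzMap.dyadicDilate ν H) x‖ₑ ≤
      ENNReal.ofReal D * (2 ^ (ν * n) * (dyadicWeight ν j x ^ A)⁻¹) := by
  rw [← mul_assoc, ← div_eq_mul_inv, ENNReal.le_div_iff_mul_le
    (Or.inl (pow_ne_zero _ (dyadicWeight_ne_zero ν j x)))
    (Or.inl (ENNReal.pow_ne_top (dyadicWeight_ne_top ν j x)))]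
  have h2 : (2 : ℝ≥0∞) ^ (ν * n) = ENNReal.ofReal (2 ^ (ν * n)) := by
    rw [ENNReal.ofReal_pow (by norm_num), ENNReal.ofReal_ofNat]
  rw [dyadicWeight, ← ENNReal.ofReal_pow (by positivity), ← ofReal_norm, h2,
    ← ENNReal.ofReal_mul (by positivity), ← ENNReal.ofReal_mul (by positivity)]
  refine ENNReal.ofReal_le_ofReal ?_
  have hx := h ((2 : ℝ) ^ ν • x)
  rw [norm_smul, norm_pow, Real.norm_ofNat, ← div_eq_mul_inv, le_div_iff₀ (by positivity)] at hx
  rw [SchwartzMap.fourier_dyadicDilate_apply, norm_mul, norm_pow, Complex.norm_ofNat, mul_pow]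
  calc _ = (1 + 2 ^ ν * ‖x‖) ^ A * ‖SchwartzMap.fourierTransformCLM ℂ H ((2 : ℝ) ^ ν • x)‖ *
        (2 ^ j) ^ A * 2 ^ (ν * n) := by ring
    _ ≤ _ := by gcongr

/-- The multipliers of the local reproducing formula: `χ` for `j = 0`, and the dilated cut-off
`θ(2^{-j} ·)` of the Schwartz function `u` for `j > 0`. -/
def reproducingMultiplier (χ θ u : SchwartzMap (Rn n) ℂ) : ℕ → SchwartzMap (Rn n) ℂ
  | 0 => χ
  | j + 1 => SchwartzMap.smulLeftCLM ℂ (fun x => θ (((2 : ℝ) ^ (j + 1))⁻¹ • x)) u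

lemma sum_reproducingMultiplier_mul {V : ℕ → SchwartzMap (Rn n) ℂ} (hV : ∀ m, V (m + 1) = V 1)
    {χ θ : SchwartzMap (Rn n) ℂ} (hθχ : ∀ x, θ x * V 1 x = χ x - χ ((2 : ℝ) • x)) (ν J : ℕ)
    (x : Rn n) :
    ∑ j ∈ Finset.range (J + 1),
      reproducingMultiplier χ θ (V ν) j x * V (ν + j) (((2 : ℝ) ^ j)⁻¹ • x) =
      χ (((2 : ℝ) ^ J)⁻¹ • x) * V ν x := by
  induction J with
  | zero => simp [reproducingMultiplier]
  | succ J ih =>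
    have h := hθχ (((2 : ℝ) ^ (J + 1))⁻¹ • x)
    have e : (2 : ℝ) • ((2 : ℝ) ^ (J + 1))⁻¹ • x = ((2 : ℝ) ^ J)⁻¹ • x := by
      rw [smul_smul, pow_succ, mul_inv, mul_comm, inv_mul_cancel_right₀ two_ne_zero]
    rw [e] at h
    rw [Finset.sum_range_succ, ih, ← add_assoc ν J 1, hV, reproducingMultiplier,
      SchwartzMap.smulLeftCLM_apply_apply (θ.hasTemperateGrowth.comp_two_pow_inv_smul (J + 1)),
      smul_eq_mul]
    linear_combination V ν x * h

lemma exists_reproducingMultiplier_bound {V : ℕ → SchwartzMap (Rn n) ℂ}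
    (hV : ∀ m, V (m + 1) = V 1) (χ : SchwartzMap (Rn n) ℂ) {θ : SchwartzMap (Rn n) ℂ} {c : ℝ}
    (hc : 0 < c) (hθ : ∀ x, ‖x‖ < c → θ x = 0) (A : ℕ) :
    ∃ D : ℝ, 0 ≤ D ∧ ∀ (ν j : ℕ) (x : Rn n), (1 + ‖x‖) ^ A *
      ‖SchwartzMap.fourierTransformCLM ℂ (reproducingMultiplier χ θ (V ν) j) x‖ ≤
        D * ((2 ^ j) ^ A)⁻¹ := by
  obtain ⟨s, C, hC, h⟩ := SchwartzMap.exists_one_add_pow_mul_norm_fourier_le (n := n) A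
  choose B hB0 hB using fun u => SchwartzMap.exists_finset_sup_smulLeftCLM_le
    θ.hasTemperateGrowth (fun l => ⟨_, SchwartzMap.norm_iteratedFDeriv_le_seminorm ℂ θ l⟩) hc hθ u
    A s
  set q := s.sup (schwartzSeminormFamily ℂ (Rn n) ℂ)
  have hD : 0 ≤ q χ + B (V 0) + B (V 1) :=
    add_nonneg (add_nonneg (apply_nonneg _ _) (hB0 _)) (hB0 _)
  refine ⟨C * (q χ + B (V 0) + B (V 1)), mul_nonneg hC hD, fun ν j x => (h _ x).trans ?_⟩
  rw [mul_assoc]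
  gcongr
  cases j with
  | zero =>
    have h0 := hB0 (V 0)
    have h1 := hB0 (V 1)
    simp only [reproducingMultiplier, pow_zero, one_pow, inv_one, mul_one]
    linarith
  | succ j =>
    refine (hB (V ν) (j + 1)).trans ?_
    have hχ : 0 ≤ q χ := apply_nonneg _ _
    gcongr
    cases ν with
    | zero => linarith [hB0 (V 1)]
    | succ ν => rw [hV]; linarith [hB0 (V 0)]

/-- The local reproducing formula, in the form of an integral inequality. -/
lemma exists_reproducing {V : ℕ → SchwartzMap (Rn n) ℂ} (hV : ∀ m, V (m + 1) = V 1)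
    {χ θ : SchwartzMap (Rn n) ℂ} {c : ℝ} (hc : 0 < c) (hχ : ∀ x, ‖x‖ < c → χ x = 1)
    (hθ : ∀ x, ‖x‖ < c → θ x = 0) (hθχ : ∀ x, θ x * V 1 x = χ x - χ ((2 : ℝ) • x)) :
    ∃ C : ℕ → ℝ≥0∞, (∀ A, C A ≠ ∞) ∧ ∀ f : TemperedDist n, Reproducing C fun m z =>
      ‖distConv (SchwartzMap.fourierTransformCLM ℂ (SchwartzMap.dyadicDilate m (V m))) f z‖ₑ := by
  choose D hD0 hD using exists_reproducingMultiplier_bound hV χ hc hθ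
  refine ⟨fun A => ENNReal.ofReal (D A), fun A => ENNReal.ofReal_ne_top, fun f A ν y => ?_⟩
  set ψ : ℕ → SchwartzMap (Rn n) ℂ := fun m => SchwartzMap.dyadicDilate m (V m) with hψ
  set G : ℕ → Rn n → ℝ≥0∞ := fun m z => ‖distConv (SchwartzMap.fourierTransformCLM ℂ (ψ m)) f z‖ₑ
  let T := fourierDistConvCLM f y
  let κ (j : ℕ) := SchwartzMap.dyadicDilate ν (reproducingMultiplier χ θ (V ν) j)
  let P (j : ℕ) := SchwartzMap.smulLeftCLM ℂ (κ j) (ψ (ν + j))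
  have hPapply (j : ℕ) (x : Rn n) : P j x = κ j x * ψ (ν + j) x :=
    SchwartzMap.smulLeftCLM_apply_apply (κ j).hasTemperateGrowth _ x
  have hcut : Function.HasTemperateGrowth fun x => 1 - χ x :=
    (Function.HasTemperateGrowth.const 1).sub χ.hasTemperateGrowth
  let R (J : ℕ) := SchwartzMap.smulLeftCLM ℂ (fun x => 1 - χ (((2 : ℝ) ^ J)⁻¹ • x)) (V ν)
  have hRapply (J : ℕ) (x : Rn n) : R J x = (1 - χ (((2 : ℝ) ^ J)⁻¹ • x)) * V ν x :=
    SchwartzMap.smulLeftCLM_apply_apply (hcut.comp_two_pow_inv_smul J) _ x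
  have hR : Filter.Tendsto R Filter.atTop (nhds 0) :=
    SchwartzMap.tendsto_smulLeftCLM_zero hcut
      (χ.exists_norm_iteratedFDeriv_const_sub_le 1) hc (fun x hx => by rw [hχ x hx, sub_self]) (V ν)
  have hdecomp (J : ℕ) : ψ ν = (∑ j ∈ Finset.range (J + 1), P j) +
      SchwartzMap.dyadicDilate ν (R J) := by
    ext x
    have h := sum_reproducingMultiplier_mul hV hθχ ν J (((2 : ℝ) ^ ν)⁻¹ • x)
    have hsum : (∑ j ∈ Finset.range (J + 1), P j) x = ∑ j ∈ Finset.range (J + 1),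
        reproducingMultiplier χ θ (V ν) j (((2 : ℝ) ^ ν)⁻¹ • x) *
          V (ν + j) (((2 : ℝ) ^ j)⁻¹ • ((2 : ℝ) ^ ν)⁻¹ • x) := by
      rw [sum_apply]
      refine Finset.sum_congr rfl fun j _ => ?_
      rw [hPapply, hψ]
      simp only [SchwartzMap.dyadicDilate_apply, κ, smul_smul]
      rw [pow_add, mul_inv, mul_comm ((2 : ℝ) ^ ν)⁻¹]
    rw [add_apply, hsum, h, SchwartzMap.dyadicDilate_apply ν (R J), hRapply]
    simp only [hψ, SchwartzMap.dyadicDilate_apply]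
    ring
  have hterm (j : ℕ) : ‖T (P j)‖ₑ ≤
      ENNReal.ofReal (D A) * ∫⁻ z, 2 ^ (ν * n) * damped A G ν y j z := by
    rw [fourierDistConvCLM_apply, SchwartzMap.fourier_eq_conv_of_eq_mul (hPapply j),
      ← lintegral_const_mul' _ _ ENNReal.ofReal_ne_top]
    refine (enorm_distConv_conv_le _ _ _ _).trans (lintegral_mono fun z => ?_)
    refine (mul_le_mul_left (enorm_fourier_dyadicDilate_le (hD0 A) (hD A ν j) ν (y - z)) _).trans
      (le_of_eq ?_)
    simp only [damped, G, mul_assoc]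
  have hlim : Filter.Tendsto (fun J => (ENNReal.ofReal (D A) *
      ∑' j, ∫⁻ z, 2 ^ (ν * n) * damped A G ν y j z) + ‖T (SchwartzMap.dyadicDilate ν (R J))‖ₑ)
      Filter.atTop (nhds ((ENNReal.ofReal (D A) *
        ∑' j, ∫⁻ z, 2 ^ (ν * n) * damped A G ν y j z) + 0)) := by
    refine Filter.Tendsto.add tendsto_const_nhds ?_
    have h := ((T.comp (SchwartzMap.dyadicDilate ν)).continuous.tendsto 0).comp hR
    simpa using h.enorm
  rw [add_zero] at hlim
  refine ge_of_tendsto' hlim fun J => ?_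
  calc G ν y = ‖T (ψ ν)‖ₑ := rfl
    _ ≤ (∑ j ∈ Finset.range (J + 1), ‖T (P j)‖ₑ) + ‖T (SchwartzMap.dyadicDilate ν (R J))‖ₑ := by
      rw [hdecomp J, map_add, map_sum]
      refine (enorm_add_le _ _).trans ?_
      gcongr
      exact enorm_sum_le _ _
    _ ≤ (ENNReal.ofReal (D A) * ∑ j ∈ Finset.range (J + 1),
          ∫⁻ z, 2 ^ (ν * n) * damped A G ν y j z) + _ := by
      rw [Finset.mul_sum]
      gcongr with j
      exact hterm j
    _ ≤ _ := by
      gcongr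
      exact ENNReal.sum_le_tsum _

/-- There is a Schwartz function which is one on the ball of radius `r` and vanishes off the ball
of radius `R > r`. -/
lemma exists_schwartz_cutoff {r R : ℝ} (hr : 0 < r) (hrR : r < R) :
    ∃ χ : SchwartzMap (Rn n) ℂ, (∀ x, ‖x‖ ≤ r → χ x = 1) ∧ ∀ x, R ≤ ‖x‖ → χ x = 0 := by
  let b : ContDiffBump (0 : Rn n) := ⟨r, R, hr, hrR⟩
  have hs : HasCompactSupport fun x => (b x : ℂ) :=
    b.hasCompactSupport.comp_left (g := Complex.ofReal) Complex.ofReal_zero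
  have hd : ContDiff ℝ (⊤ : ℕ∞) fun x => (b x : ℂ) := Complex.ofRealCLM.contDiff.comp b.contDiff
  refine ⟨hs.toSchwartzMap hd, fun x hx => ?_, fun x hx => ?_⟩
  · have h : b x = 1 := b.one_of_mem_closedBall (by simpa using hx)
    simp [h]
  · have h : b x = 0 := b.zero_of_le_dist (by simpa using hx)
    simp [h]

/-- A Schwartz function which vanishes off an annulus on which the Schwartz function `u` has no
zero is divisible by `u`. -/
lemma exists_schwartz_mul_eq {g u : SchwartzMap (Rn n) ℂ} {r R : ℝ}
    (hr : ∀ x, ‖x‖ ≤ r → g x = 0) (hR : ∀ x, R ≤ ‖x‖ → g x = 0)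
    (hu : ∀ x, r ≤ ‖x‖ → ‖x‖ ≤ R → u x ≠ 0) :
    ∃ θ : SchwartzMap (Rn n) ℂ, (∀ x, ‖x‖ < r → θ x = 0) ∧ ∀ x, θ x * u x = g x := by
  have hs : HasCompactSupport fun x => g x / u x := by
    refine HasCompactSupport.intro (isCompact_closedBall (0 : Rn n) R) fun x hx => ?_
    rw [hR x (by simpa using (not_le.1 (by simpa using hx)).le), zero_div]
  have hzero {s : Set (Rn n)} {x : Rn n} (hs : IsOpen s) (hx : x ∈ s) (h : ∀ y ∈ s, g y = 0) :
      ContDiffAt ℝ (⊤ : ℕ∞) (fun x => g x / u x) x := by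
    refine (contDiffAt_const (c := (0 : ℂ))).congr_of_eventuallyEq ?_
    filter_upwards [hs.mem_nhds hx] with y hy
    rw [h y hy, zero_div]
  have hd : ContDiff ℝ (⊤ : ℕ∞) fun x => g x / u x := by
    rw [contDiff_iff_contDiffAt]
    intro x
    rcases lt_or_ge ‖x‖ r with h | h
    · exact hzero (isOpen_lt continuous_norm continuous_const) h fun y hy => hr y (le_of_lt hy)
    rcases lt_or_ge R ‖x‖ with h' | h'
    · exact hzero (isOpen_lt continuous_const continuous_norm) h' fun y hy => hR y (le_of_lt hy)
    · simp only [div_eq_mul_inv]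
      have hinv : ContDiffAt ℝ (⊤ : ℕ∞) (fun x => (u x)⁻¹) x :=
        ContDiffAt.fun_inv (u.smooth ⊤).contDiffAt (hu x h h')
      exact (g.smooth ⊤).contDiffAt.mul hinv
  refine ⟨hs.toSchwartzMap hd, fun x hx => ?_, fun x => ?_⟩
  · change g x / u x = 0
    rw [hr x hx.le, zero_div]
  · change g x / u x * u x = g x
    by_cases h : u x = 0
    · rw [h, mul_zero]
      rcases le_total ‖x‖ r with h' | h'
      · exact (hr x h').symm
      · exact (hR x (not_lt.1 fun h'' => hu x h' h''.le h)).symm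
    · exact div_mul_cancel₀ _ h

/-- The Peetre maximal estimate for a system of dilates of two Schwartz functions. -/
lemma exists_peetre_le {al al1 al2 C : ℝ} (hal : 0 ≤ al) {w : ℕ → Rn n → ℝ}
    (hw : AdmissibleWeights al al1 al2 C w) {V : ℕ → SchwartzMap (Rn n) ℂ}
    (hV : ∀ m, V (m + 1) = V 1) {r R : ℝ} (hr : 0 < r) (hrR : r < R)
    (hu : ∀ x, r / 2 ≤ ‖x‖ → ‖x‖ ≤ R → V 1 x ≠ 0) {t : ℝ} (ht : 0 < t) {N : ℕ} {a : ℝ}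
    (ha : al < a) (haN : a ≤ N) :
    ∃ K : ℝ≥0∞, K ≠ ∞ ∧ ∀ (f : TemperedDist n) (ν : ℕ) (x : Rn n),
      (peetreMax a ν (distConv (SchwartzMap.fourierTransformCLM ℂ
          (SchwartzMap.dyadicDilate ν (V ν))) f) x * ENNReal.ofReal (w ν x)) ^ t ≤
        K * ∑' j : ℕ,
          ENNReal.ofReal ((2 : ℝ) ^ (-(j : ℝ) * (N - a + al1) * t)) *
            lconv (etaK (ν + j) ((a - al) * t))
              (fun z => ((‖distConv (SchwartzMap.fourierTransformCLM ℂ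
                (SchwartzMap.dyadicDilate (ν + j) (V (ν + j)))) f z‖₊ : ℝ≥0∞) *
                    ENNReal.ofReal (w (ν + j) z)) ^ t) x := by
  obtain ⟨χ, hχ1, hχ0⟩ := exists_schwartz_cutoff (n := n) hr hrR
  let g : SchwartzMap (Rn n) ℂ := χ - SchwartzMap.compCLMOfContinuousLinearEquiv ℂ
    (ContinuousLinearEquiv.smulLeft (Units.mk0 (2 : ℝ) two_ne_zero)) χ
  have hg (x : Rn n) : g x = χ x - χ ((2 : ℝ) • x) := rfl
  have hnorm (x : Rn n) : ‖(2 : ℝ) • x‖ = 2 * ‖x‖ := by rw [norm_smul, Real.norm_two]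
  obtain ⟨θ, hθ, hθχ⟩ := exists_schwartz_mul_eq (g := g) (u := V 1) (r := r / 2) (R := R)
    (fun x hx => by rw [hg, hχ1 _ (by linarith), hχ1 _ (by rw [hnorm]; linarith), sub_self])
    (fun x hx => by rw [hg, hχ0 _ hx, hχ0 _ (by rw [hnorm]; linarith), sub_self]) hu
  obtain ⟨B, hB, hrep⟩ := exists_reproducing hV (half_pos hr) (fun x hx => hχ1 x (by linarith)) hθ
    fun x => (hθχ x).trans (hg x)
  obtain ⟨K, hK, hsum⟩ := exists_rpow_le_dampedSum (n := n) ht hB N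
  refine ⟨K * ENNReal.ofReal (2 ^ a * C) ^ t,
    mul_ne_top hK (ENNReal.rpow_ne_top_of_nonneg ht.le ENNReal.ofReal_ne_top), fun f ν x => ?_⟩
  refine peetre_le_of_rpow_le hal hw ht ha haN (fun m => distConv (SchwartzMap.fourierTransformCLM ℂ
    (SchwartzMap.dyadicDilate m (V m))) f) (hsum _ (fun m => ?_) (hrep f) ?_) ν x
  · exact (continuous_distConv _ f).measurable.enorm
  · obtain ⟨A₀, D, hD, h⟩ := exists_norm_distConv_dyadicDilate_le f V hV
    refine ⟨A₀, fun A hA => dampedSup_ne_top_of_growth (fun m z => ?_) hA hD⟩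
    rw [← enorm_eq_nnnorm, ← ofReal_norm]
    exact ENNReal.ofReal_le_ofReal (h m z)

/-- the weighted pointwise estimate for the Peetre maximal function in
terms of convolutions with the kernels `η_{j,(a-α)t}`. -/
theorem statement15 (n : ℕ) (al al1 al2 C : ℝ) (h12 : al1 ≤ al2) (hal : 0 ≤ al)
    (w : ℕ → Rn n → ℝ) (hw : AdmissibleWeights al al1 al2 C w)
    (eps k : ℝ) (heps : 0 < eps) (hk1 : 1 < k) (hk2 : k ≤ 2)
    (psi0 psi1 : SchwartzMap (Rn n) ℂ)
    (hpsi0 : ∀ x : Rn n, ‖x‖ ≤ k * eps → 0 < ‖psi0 x‖)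
    (hpsi1 : ∀ x : Rn n, eps ≤ ‖x‖ → ‖x‖ ≤ 2 * k * eps → 0 < ‖psi1 x‖)
    (psis : ℕ → SchwartzMap (Rn n) ℂ)
    (hpsis0 : psis 0 = psi0) (hpsis1 : psis 1 = psi1)
    (hpsis : ∀ j : ℕ, 2 ≤ j → ∀ x : Rn n, psis j x = psi1 ((2 : ℝ) ^ (-(j : ℝ) + 1) • x))
    (t : ℝ) (ht : 0 < t) (N : ℕ) (a : ℝ) (ha : al < a) (haN : a ≤ N) :
    ∃ c : ℝ, 0 < c ∧ ∀ (f : TemperedDist n) (ν : ℕ) (x : Rn n),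
      (peetreMax a ν (distConv (SchwartzMap.fourierTransformCLM ℂ (psis ν)) f) x *
          ENNReal.ofReal (w ν x)) ^ t ≤
        ENNReal.ofReal c * ∑' j : ℕ,
          ENNReal.ofReal ((2 : ℝ) ^ (-(j : ℝ) * (N - a + al1) * t)) *
            lconv (etaK (ν + j) ((a - al) * t))
              (fun z =>
                ((‖distConv (SchwartzMap.fourierTransformCLM ℂ (psis (ν + j))) f z‖₊ : ℝ≥0∞) *
                    ENNReal.ofReal (w (ν + j) z)) ^ t) x := by
  let u : SchwartzMap (Rn n) ℂ := SchwartzMap.compCLMOfContinuousLinearEquiv ℂ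
    (ContinuousLinearEquiv.smulLeft (Units.mk0 (2 : ℝ) two_ne_zero)) psi1
  have hu (x : Rn n) : u x = psi1 ((2 : ℝ) • x) := rfl
  let V : ℕ → SchwartzMap (Rn n) ℂ
    | 0 => psi0
    | _ + 1 => u
  have hpsisV (m : ℕ) : psis m = SchwartzMap.dyadicDilate m (V m) := by
    ext x
    match m with
    | 0 => simp [hpsis0, V]
    | 1 => simp [hpsis1, V, hu]
    | m + 2 =>
      rw [hpsis _ (by lia), SchwartzMap.dyadicDilate_apply, hu, smul_smul,
        Real.rpow_add two_pos, Real.rpow_neg two_pos.le, Real.rpow_one, Real.rpow_natCast,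
        mul_comm]
  obtain ⟨K, hK, h⟩ := exists_peetre_le hal hw (V := V) (fun _ => rfl) heps
    (lt_mul_of_one_lt_left heps hk1) (fun x h1 h2 => by
      have hx : ‖(2 : ℝ) • x‖ = 2 * ‖x‖ := by rw [norm_smul, Real.norm_two]
      change psi1 ((2 : ℝ) • x) ≠ 0
      exact norm_pos_iff.1 (hpsi1 _ (by rw [hx]; linarith) (by rw [hx]; linarith))) ht ha haN
  refine ⟨K.toReal + 1, by positivity, fun f ν x => ?_⟩
  simp only [hpsisV]
  refine (h f ν x).trans ?_
  gcongr
  rw [ENNReal.ofReal_add ENNReal.toReal_nonneg zero_le_one, ENNReal.ofReal_toReal hK]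
  exact le_self_add

end
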